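/- arXiv:2304.01952 — 9 statements merged into one kernel-verified Lean document; each statement's English description precedes it below -/
import Mathlib

section
/- Let α ∈ (0,1] and let θ : ℝ → ℝ be a smooth 1-periodic function. Then the function U(·;θ) is Hölder continuous of exponent α on [0,1] (i.e. there is a constant C with |U(y₁;θ) − U(y₂;θ)| ≤ C|y₁ − y₂|^α for all y₁, y₂ ∈ [0,1]), and U(0;θ) = U(1;θ) = 0. -/
open Real Filter

/-- The second component of the Weierstrass flow. -/
noncomputable def weierstrassU2 (α x y : ℝ) : ℝ :=
  ∑' k : ℕ, (2 : ℝ) ^ (-(α * (k : ℝ))) * Real.cos (2 ^ k * π * x) * Real.sin (2 ^ k * π * y)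

/-- `U(y;θ) = ∫_0^1 u₂(x,y)² θ(x) dx`. -/
noncomputable def weierstrassU (α : ℝ) (θ : ℝ → ℝ) (y : ℝ) : ℝ :=
  ∫ x in (0 : ℝ)..1, (weierstrassU2 α x y) ^ 2 * θ x

/-- Fourier coefficient decay, one integration by parts. -/
lemma wh_cosint (θ : ℝ → ℝ) (hθ : ContDiff ℝ (⊤ : ℕ∞) θ) (M : ℝ)
    (hM : ∀ x ∈ Set.Icc (0 : ℝ) 1, |deriv θ x| ≤ M) (n : ℤ) :
    |(n : ℝ)| * |∫ x in (0 : ℝ)..1, Real.cos (n * π * x) * θ x| ≤ M := by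
  have hM0 : 0 ≤ M := (abs_nonneg _).trans (hM 0 (by simp))
  by_cases hn : n = 0
  · simpa [hn] using hM0
  have hn' : (n : ℝ) ≠ 0 := by exact_mod_cast hn
  have hcd : Continuous (deriv θ) := hθ.continuous_deriv (by simp)
  have hd : Differentiable ℝ θ := hθ.differentiable (by simp)
  have h1 : ∀ x : ℝ, HasDerivAt (fun x : ℝ => Real.sin (n * π * x)) (Real.cos (n * π * x) * (n * π)) x := by
    intro x
    have := ((hasDerivAt_id x).const_mul ((n : ℝ) * π)).sin
    simpa using this
  have key := intervalIntegral.integral_mul_deriv_eq_deriv_mul (a := 0) (b := 1)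
    (u := θ) (u' := deriv θ) (v := fun x : ℝ => Real.sin (n * π * x))
    (v' := fun x : ℝ => Real.cos (n * π * x) * (n * π))
    (fun x _ => (hd x).hasDerivAt) (fun x _ => h1 x)
    (hcd.intervalIntegrable _ _) ((by fun_prop : Continuous _).intervalIntegrable _ _)
  have e1 : (∫ x in (0 : ℝ)..1, θ x * (Real.cos (n * π * x) * (n * π)))
      = (n * π) * ∫ x in (0 : ℝ)..1, Real.cos (n * π * x) * θ x := by
    rw [← intervalIntegral.integral_const_mul]
    congr 1; ext x; ring
  have hs : Real.sin (n * π * 1) = 0 := by rw [mul_one]; exact Real.sin_int_mul_pi n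
  rw [e1] at key
  simp only [hs, mul_zero, Real.sin_zero, sub_zero, zero_sub] at key
  have hb : |∫ x in (0 : ℝ)..1, deriv θ x * Real.sin (n * π * x)| ≤ M := by
    have := intervalIntegral.norm_integral_le_of_norm_le_const (a := 0) (b := 1) (C := M)
      (f := fun x => deriv θ x * Real.sin (n * π * x)) (by
        intro x hx
        rw [Set.uIoc_of_le zero_le_one] at hx
        rw [Real.norm_eq_abs, abs_mul]
        calc _ ≤ M * 1 := by
              gcongr
              · exact hM x ⟨hx.1.le, hx.2⟩
              · exact Real.abs_sin_le_one _
          _ = M := mul_one M)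
    simpa using this
  have h2 : |(n : ℝ)| * π * |∫ x in (0 : ℝ)..1, Real.cos (n * π * x) * θ x| ≤ M := by
    have := congrArg abs key
    rw [abs_neg, abs_mul, abs_mul, abs_of_pos Real.pi_pos] at this
    rw [this]; exact hb
  have hp : (1 : ℝ) ≤ π := by linarith [Real.pi_gt_three]
  refine le_trans ?_ h2
  have h3 : 0 ≤ |(n : ℝ)| := abs_nonneg _
  gcongr
  nlinarith

/-- Coupling coefficients. -/
noncomputable def whC (θ : ℝ → ℝ) (j k : ℕ) : ℝ :=
  ∫ x in (0 : ℝ)..1, Real.cos (2 ^ j * π * x) * Real.cos (2 ^ k * π * x) * θ x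

lemma wh_pow (j k : ℕ) (h : j ≠ k) : (2 : ℝ) ^ j + 2 ^ k ≤ 3 * |(2 : ℝ) ^ j - 2 ^ k| := by
  have main : ∀ j k : ℕ, j < k → (2 : ℝ) ^ j * 2 ≤ 2 ^ k := by
    intro j k h
    rw [← pow_succ]
    exact pow_le_pow_right₀ (by norm_num) h
  rcases lt_or_gt_of_ne h with h | h
  · have := main j k h
    have := neg_le_abs ((2 : ℝ) ^ j - 2 ^ k)
    linarith
  · have := main k j h
    have := le_abs_self ((2 : ℝ) ^ j - 2 ^ k)
    linarith

lemma wh_C_off (θ : ℝ → ℝ) (hθ : ContDiff ℝ (⊤ : ℕ∞) θ) (M : ℝ)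
    (hM : ∀ x ∈ Set.Icc (0 : ℝ) 1, |deriv θ x| ≤ M) (j k : ℕ) (h : j ≠ k) :
    ((2 : ℝ) ^ j + 2 ^ k) * |whC θ j k| ≤ 2 * M := by
  have hc := hθ.continuous
  have h1 := wh_cosint θ hθ M hM (2 ^ j + 2 ^ k)
  have h2 := wh_cosint θ hθ M hM (2 ^ j - 2 ^ k)
  push_cast at h1 h2
  have e : whC θ j k = (1 / 2) * ((∫ x in (0 : ℝ)..1, Real.cos (((2 : ℝ) ^ j + 2 ^ k) * π * x) * θ x)
      + ∫ x in (0 : ℝ)..1, Real.cos (((2 : ℝ) ^ j - 2 ^ k) * π * x) * θ x) := by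
    rw [← intervalIntegral.integral_add, ← intervalIntegral.integral_const_mul, whC]
    · congr 1; ext x
      have a1 : ((2 : ℝ) ^ j + 2 ^ k) * π * x = 2 ^ j * π * x + 2 ^ k * π * x := by ring
      have a2 : ((2 : ℝ) ^ j - 2 ^ k) * π * x = 2 ^ j * π * x - 2 ^ k * π * x := by ring
      rw [a1, a2, Real.cos_add, Real.cos_sub]; ring
    · exact (by fun_prop : Continuous _).intervalIntegrable _ _
    · exact (by fun_prop : Continuous _).intervalIntegrable _ _
  set A := ∫ x in (0 : ℝ)..1, Real.cos (((2 : ℝ) ^ j + 2 ^ k) * π * x) * θ x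
  set B := ∫ x in (0 : ℝ)..1, Real.cos (((2 : ℝ) ^ j - 2 ^ k) * π * x) * θ x
  have hp : (0 : ℝ) < (2 : ℝ) ^ j + 2 ^ k := by positivity
  rw [abs_of_pos hp] at h1
  have h3 := mul_le_mul_of_nonneg_right (wh_pow j k h) (abs_nonneg B)
  have h4 : |whC θ j k| ≤ 1 / 2 * (|A| + |B|) := by
    rw [e, abs_mul, abs_of_pos (by norm_num : (0 : ℝ) < 1 / 2)]
    gcongr
    exact abs_add_le A B
  have h5 := mul_le_mul_of_nonneg_left h4 hp.le
  nlinarith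

lemma wh_C_le (θ : ℝ → ℝ) (M : ℝ)
    (hM : ∀ x ∈ Set.Icc (0 : ℝ) 1, |θ x| ≤ M) (j k : ℕ) : |whC θ j k| ≤ M := by
  have := intervalIntegral.norm_integral_le_of_norm_le_const (a := 0) (b := 1) (C := M)
      (f := fun x => Real.cos (2 ^ j * π * x) * Real.cos (2 ^ k * π * x) * θ x) (by
        intro x hx
        rw [Set.uIoc_of_le zero_le_one] at hx
        rw [Real.norm_eq_abs, abs_mul, abs_mul]
        calc _ ≤ 1 * 1 * M := by
              gcongr
              · exact Real.abs_cos_le_one _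
              · exact Real.abs_cos_le_one _
              · exact hM x ⟨hx.1.le, hx.2⟩
          _ = M := by ring)
  simpa [whC] using this

/-- Lipschitz bound for products of sines. -/
lemma wh_sin (p q y z : ℝ) (hp : 0 ≤ p) (hq : 0 ≤ q) :
    |Real.sin (p * π * y) * Real.sin (q * π * y) - Real.sin (p * π * z) * Real.sin (q * π * z)|
      ≤ (p + q) * π * |y - z| := by
  have L : ∀ p : ℝ, 0 ≤ p → |Real.sin (p * π * y) - Real.sin (p * π * z)| ≤ p * π * |y - z| := by
    intro p hp
    have h := Real.abs_sin_sub_sin_le (p * π * y) (p * π * z)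
    rwa [← mul_sub, abs_mul (p * π), abs_of_nonneg (by positivity : 0 ≤ p * π)] at h
  have e : Real.sin (p * π * y) * Real.sin (q * π * y) - Real.sin (p * π * z) * Real.sin (q * π * z)
    = (Real.sin (p * π * y) - Real.sin (p * π * z)) * Real.sin (q * π * y)
      + Real.sin (p * π * z) * (Real.sin (q * π * y) - Real.sin (q * π * z)) := by ring
  rw [e]
  refine (abs_add_le _ _).trans ?_
  rw [abs_mul, abs_mul]
  have := mul_le_mul (L p hp) (Real.abs_sin_le_one (q * π * y)) (abs_nonneg _) (by positivity)
  have := mul_le_mul (Real.abs_sin_le_one (p * π * z)) (L q hq) (abs_nonneg _) (by positivity)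
  linarith

/-- The amplitude. -/
noncomputable def whA (α : ℝ) (k : ℕ) : ℝ := (2 : ℝ) ^ (-(α * (k : ℝ)))

lemma whA_pos (α : ℝ) (k : ℕ) : 0 < whA α k := by unfold whA; positivity

lemma whA_summable (α : ℝ) (hα : 0 < α) : Summable (whA α) := by
  have : whA α = fun k : ℕ => ((2 : ℝ) ^ (-α)) ^ k := by
    ext k
    rw [whA, ← Real.rpow_natCast, ← Real.rpow_mul (by norm_num)]; ring_nf
  rw [this]
  exact summable_geometric_of_lt_one (by positivity)
    (Real.rpow_lt_one_of_one_lt_of_neg (by norm_num) (by linarith))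

lemma whA_half (α : ℝ) (k : ℕ) : whA α k = whA (α / 2) k * whA (α / 2) k := by
  unfold whA
  rw [← Real.rpow_add (by norm_num)]; ring_nf

lemma whA_le_one (α : ℝ) (hα : 0 < α) (k : ℕ) : whA α k ≤ 1 := by
  unfold whA
  apply Real.rpow_le_one_of_one_le_of_nonpos (by norm_num)
  have : 0 ≤ α * (k : ℝ) := by positivity
  linarith

lemma whA_pow (α : ℝ) (k : ℕ) : whA α k * ((2 : ℝ) ^ k) ^ α = 1 := by
  unfold whA
  rw [← Real.rpow_natCast, ← Real.rpow_mul (by norm_num), ← Real.rpow_add (by norm_num)]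
  ring_nf; simp

/-- Double series for `U`. -/
lemma wh_hasSum (α : ℝ) (hα : 0 < α) (θ : ℝ → ℝ) (hθ : Continuous θ) (M : ℝ)
    (hM : ∀ x ∈ Set.Icc (0 : ℝ) 1, |θ x| ≤ M) (y : ℝ) :
    HasSum (fun p : ℕ × ℕ => whA α p.1 * whA α p.2 *
      (Real.sin (2 ^ p.1 * π * y) * Real.sin (2 ^ p.2 * π * y)) * whC θ p.1 p.2)
      (weierstrassU α θ y) := by
  have hM0 : 0 ≤ M := (abs_nonneg _).trans (hM 0 (by simp))
  have hA := whA_summable α hα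
  have hAA : Summable (fun p : ℕ × ℕ => whA α p.1 * whA α p.2) :=
    hA.mul_of_nonneg hA (fun k => (whA_pos α k).le) (fun k => (whA_pos α k).le)
  let g : ℝ → ℕ → ℝ := fun x k =>
    whA α k * Real.cos (2 ^ k * π * x) * Real.sin (2 ^ k * π * y)
  have hg : ∀ x k, ‖g x k‖ ≤ whA α k := by
    intro x k
    simp only [g]
    rw [norm_mul, norm_mul, Real.norm_eq_abs, Real.norm_eq_abs, Real.norm_eq_abs,
      abs_of_pos (whA_pos α k)]
    have h1 := Real.abs_cos_le_one (2 ^ k * π * x)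
    have h2 := Real.abs_sin_le_one (2 ^ k * π * y)
    have h0 := (whA_pos α k).le
    calc _ ≤ whA α k * 1 * 1 := by gcongr
      _ = _ := by ring
  have hgs : ∀ x, Summable (fun k => ‖g x k‖) := fun x =>
    Summable.of_nonneg_of_le (fun _ => norm_nonneg _) (hg x) hA
  have key := intervalIntegral.hasSum_integral_of_dominated_convergence
    (μ := MeasureTheory.volume) (a := 0) (b := 1)
    (F := fun (p : ℕ × ℕ) x => g x p.1 * g x p.2 * θ x)
    (f := fun x => (weierstrassU2 α x y) ^ 2 * θ x)
    (fun p _ => whA α p.1 * whA α p.2 * M) ?_ ?_ ?_ ?_ ?_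
  · refine Eq.mp (congrArg (fun f => HasSum f _) (funext fun p => ?_)) key
    simp only [whC, g]
    rw [← intervalIntegral.integral_const_mul]
    congr 1; ext x
    ring
  · intro p
    exact (by fun_prop : Continuous _).aestronglyMeasurable
  · intro p
    refine Eventually.of_forall fun x hx => ?_
    rw [Set.uIoc_of_le zero_le_one] at hx
    rw [norm_mul, norm_mul]
    have := (whA_pos α p.1).le
    have := (whA_pos α p.2).le
    gcongr
    · exact hg x _
    · exact hg x _
    · exact hM x ⟨hx.1.le, hx.2⟩
  · exact Eventually.of_forall fun x hx => hAA.mul_right M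
  · exact intervalIntegrable_const
  · refine Eventually.of_forall fun x hx => ?_
    have h1 : HasSum (g x) (weierstrassU2 α x y) := (hgs x).of_norm.hasSum
    have h2 := h1.mul h1 (summable_mul_of_summable_norm (hgs x) (hgs x))
    rw [pow_two]
    exact h2.mul_right (θ x)

/-- The bound on a single pair. -/
lemma wh_pair (α : ℝ) (hα : α ∈ Set.Ioc (0 : ℝ) 1) (θ : ℝ → ℝ) (hθ : ContDiff ℝ (⊤ : ℕ∞) θ)
    (M : ℝ) (hM : ∀ x ∈ Set.Icc (0 : ℝ) 1, |θ x| ≤ M)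
    (hM' : ∀ x ∈ Set.Icc (0 : ℝ) 1, |deriv θ x| ≤ M) (y z : ℝ) (hd : |y - z| ≤ 1) (j k : ℕ) :
    |whA α j * whA α k * (Real.sin (2 ^ j * π * y) * Real.sin (2 ^ k * π * y)) * whC θ j k
      - whA α j * whA α k * (Real.sin (2 ^ j * π * z) * Real.sin (2 ^ k * π * z)) * whC θ j k|
    ≤ whA (α / 2) j * whA (α / 2) k * (2 * π * M * |y - z| ^ α) := by
  obtain ⟨h0, h1⟩ := hα
  have hM0 : 0 ≤ M := (abs_nonneg _).trans (hM 0 (by simp))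
  have hpi := Real.pi_pos
  have hpi3 := Real.pi_gt_three
  have hS := wh_sin (2 ^ j) (2 ^ k) y z (by positivity) (by positivity)
  rw [← sub_mul, ← mul_sub, abs_mul, abs_mul, abs_mul, abs_of_pos (whA_pos α j),
    abs_of_pos (whA_pos α k)]
  set D := |y - z| with hD
  have hD0 : 0 ≤ D := abs_nonneg _
  have hbj := whA_pos (α / 2) j
  have hbk := whA_pos (α / 2) k
  have hDα : D ≤ D ^ α := by
    simpa using Real.rpow_le_rpow_of_exponent_ge' hD0 hd h0.le h1
  by_cases hjk : j = k
  · subst hjk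
    have hC := wh_C_le θ M hM j j
    set S := |Real.sin (2 ^ j * π * y) * Real.sin (2 ^ j * π * y)
      - Real.sin (2 ^ j * π * z) * Real.sin (2 ^ j * π * z)| with hSdef
    have hS1 : S ≤ 1 := by
      rw [hSdef, abs_le]
      have a1 := Real.sin_sq_le_one (2 ^ j * π * y)
      have a2 := Real.sin_sq_le_one (2 ^ j * π * z)
      constructor <;> nlinarith [sq_nonneg (Real.sin (2 ^ j * π * y)), sq_nonneg (Real.sin (2 ^ j * π * z))]
    have hS0 : 0 ≤ S := abs_nonneg _
    have hSα : S ≤ (2 * π) * ((2 ^ j) ^ α * D ^ α) := by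
      calc S ≤ S ^ α := by simpa using Real.rpow_le_rpow_of_exponent_ge' hS0 hS1 h0.le h1
        _ ≤ ((2 * π) * (2 ^ j * D)) ^ α := by
            apply Real.rpow_le_rpow hS0 _ h0.le
            linarith
        _ = (2 * π) ^ α * ((2 ^ j) ^ α * D ^ α) := by
            rw [Real.mul_rpow (x := 2 * π) (by positivity) (by positivity),
              Real.mul_rpow (x := 2 ^ j) (by positivity) (by positivity)]
        _ ≤ _ := by
            gcongr
            simpa using Real.rpow_le_rpow_of_exponent_le (by linarith : (1 : ℝ) ≤ 2 * π) h1
    have hA0 := whA_pos α j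
    calc whA α j * whA α j * S * |whC θ j j|
        ≤ whA α j * whA α j * ((2 * π) * ((2 ^ j) ^ α * D ^ α)) * M := by gcongr
      _ = whA α j * (whA α j * (2 ^ j) ^ α) * (2 * π * M * D ^ α) := by ring
      _ = _ := by rw [whA_pow, mul_one, whA_half]
  · have hC := wh_C_off θ hθ M hM' j k hjk
    have ha : ∀ k, whA α k ≤ whA (α / 2) k := by
      intro k
      rw [whA_half α k]
      have := whA_pos (α / 2) k
      have := whA_le_one (α / 2) (by linarith) k
      nlinarith
    have hA0 := whA_pos α j
    have hA1 := whA_pos α k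
    calc _ ≤ whA α j * whA α k * ((2 ^ j + 2 ^ k) * π * D) * |whC θ j k| := by gcongr
      _ = whA α j * whA α k * (((2 ^ j + 2 ^ k) * |whC θ j k|) * π * D) := by ring
      _ ≤ whA (α / 2) j * whA (α / 2) k * ((2 * M) * π * D ^ α) := by
          gcongr
          · exact ha j
          · exact ha k
      _ = _ := by ring

/-- For a smooth `1`-periodic test function `θ`, the function `U(·;θ)` is `α`-Hölder continuous
on `[0,1]` and vanishes at `y = 0` and `y = 1`. -/
theorem weierstrassU_holder (α : ℝ) (hα : α ∈ Set.Ioc (0 : ℝ) 1)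
    (θ : ℝ → ℝ) (hθ : ContDiff ℝ (⊤ : ℕ∞) θ) (hper : Function.Periodic θ 1) :
    (∃ C : ℝ, ∀ y₁ ∈ Set.Icc (0 : ℝ) 1, ∀ y₂ ∈ Set.Icc (0 : ℝ) 1,
      |weierstrassU α θ y₁ - weierstrassU α θ y₂| ≤ C * |y₁ - y₂| ^ α)
    ∧ weierstrassU α θ 0 = 0 ∧ weierstrassU α θ 1 = 0 := by
  refine ⟨?_, ?_, ?_⟩
  · have hcd : Continuous (deriv θ) := hθ.continuous_deriv (by simp)
    obtain ⟨M₁, hM₁⟩ := (isCompact_Icc (a := (0 : ℝ)) (b := 1)).exists_bound_of_continuousOn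
      hθ.continuous.continuousOn
    obtain ⟨M₂, hM₂⟩ := (isCompact_Icc (a := (0 : ℝ)) (b := 1)).exists_bound_of_continuousOn
      hcd.continuousOn
    have hM : ∀ x ∈ Set.Icc (0 : ℝ) 1, |θ x| ≤ max M₁ M₂ :=
      fun x hx => (hM₁ x hx).trans (le_max_left _ _)
    have hM' : ∀ x ∈ Set.Icc (0 : ℝ) 1, |deriv θ x| ≤ max M₁ M₂ :=
      fun x hx => (hM₂ x hx).trans (le_max_right _ _)
    set M := max M₁ M₂
    have hB := whA_summable (α / 2) (by linarith [hα.1])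
    have hBB : Summable (fun p : ℕ × ℕ => whA (α / 2) p.1 * whA (α / 2) p.2) :=
      hB.mul_of_nonneg hB (fun k => (whA_pos _ k).le) (fun k => (whA_pos _ k).le)
    refine ⟨(∑' p : ℕ × ℕ, whA (α / 2) p.1 * whA (α / 2) p.2) * (2 * π * M), ?_⟩
    intro y hy z hz
    have hd : |y - z| ≤ 1 := by
      rw [abs_le]; constructor <;> linarith [hy.1, hy.2, hz.1, hz.2]
    have hs := (wh_hasSum α hα.1 θ hθ.continuous M hM y).sub
      (wh_hasSum α hα.1 θ hθ.continuous M hM z)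
    have hb := hBB.hasSum.mul_right (2 * π * M * |y - z| ^ α)
    have := tsum_of_norm_bounded (f := _) hb (fun p => (Real.norm_eq_abs _).trans_le <|
      wh_pair α hα θ hθ M hM hM' y z hd p.1 p.2)
    rw [hs.tsum_eq, Real.norm_eq_abs] at this
    linarith
  · simp [weierstrassU, weierstrassU2]
  · have : ∀ k : ℕ, Real.sin (2 ^ k * π) = 0 := by
      intro k
      have := Real.sin_nat_mul_pi (2 ^ k)
      push_cast at this
      exact this
    simp [weierstrassU, weierstrassU2, this]
end

section
/- Let α > 0 and let θ : ℝ → ℝ be a smooth 1-periodic function. Then the double series U_{NR}(y) := ∑_{k₁,k₂ ≥ 0, k₁ ≠ k₂} 2^{−α(k₁+k₂)} ( ∫_0^1 cos(2^{k₁} π x) cos(2^{k₂} π x) θ(x) dx ) sin(2^{k₁} π y) sin(2^{k₂} π y) converges uniformly on [0,1], its term-by-term derivative series in y also converges uniformly on [0,1], the sum U_{NR} is continuously differentiable on [0,1], and U_{NR}'(0) = 0. -/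
open Real Filter

/-- The coefficient `∫_0^1 cos(2^{k₁}πx) cos(2^{k₂}πx) θ(x) dx`. -/
noncomputable def nrCoeff (θ : ℝ → ℝ) (k₁ k₂ : ℕ) : ℝ :=
  ∫ x in (0 : ℝ)..1, Real.cos (2 ^ k₁ * π * x) * Real.cos (2 ^ k₂ * π * x) * θ x

/-- A term of the nonresonant double series `U_{NR}` (zero on the diagonal `k₁ = k₂`). -/
noncomputable def nrTerm (α : ℝ) (θ : ℝ → ℝ) (p : ℕ × ℕ) (y : ℝ) : ℝ :=
  if p.1 = p.2 then 0 else
    (2 : ℝ) ^ (-(α * ((p.1 : ℝ) + (p.2 : ℝ)))) * nrCoeff θ p.1 p.2 *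
      Real.sin (2 ^ p.1 * π * y) * Real.sin (2 ^ p.2 * π * y)

/-- The term-by-term `y`-derivative of `nrTerm`. -/
noncomputable def nrTermDeriv (α : ℝ) (θ : ℝ → ℝ) (p : ℕ × ℕ) (y : ℝ) : ℝ :=
  if p.1 = p.2 then 0 else
    (2 : ℝ) ^ (-(α * ((p.1 : ℝ) + (p.2 : ℝ)))) * nrCoeff θ p.1 p.2 *
      (2 ^ p.1 * π * Real.cos (2 ^ p.1 * π * y) * Real.sin (2 ^ p.2 * π * y)
        + 2 ^ p.2 * π * Real.sin (2 ^ p.1 * π * y) * Real.cos (2 ^ p.2 * π * y))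

lemma nr_osc (θ : ℝ → ℝ) (hθ : ContDiff ℝ (⊤ : ℕ∞) θ) :
    ∃ M : ℝ, 0 ≤ M ∧ ∀ m : ℤ, m ≠ 0 →
      |∫ x in (0 : ℝ)..1, Real.cos ((m : ℝ) * π * x) * θ x| ≤ M / |(m : ℝ)| := by
  have hd : Continuous (deriv θ) := hθ.continuous_deriv (by simp)
  obtain ⟨M, hM⟩ := (isCompact_Icc (a := (0 : ℝ)) (b := 1)).exists_bound_of_continuousOn
    hd.continuousOn
  have hM0 : 0 ≤ M := le_trans (norm_nonneg _) (hM 0 (by simp))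
  refine ⟨M, hM0, fun m hm => ?_⟩
  have hm' : (m : ℝ) ≠ 0 := by exact_mod_cast hm
  have hmp : (m : ℝ) * π ≠ 0 := mul_ne_zero hm' Real.pi_ne_zero
  have hv : ∀ x : ℝ, HasDerivAt (fun x => Real.sin ((m : ℝ) * π * x) / ((m : ℝ) * π))
      (Real.cos ((m : ℝ) * π * x)) x := by
    intro x
    have h1 : HasDerivAt (fun x : ℝ => (m : ℝ) * π * x) ((m : ℝ) * π) x := by
      simpa using (hasDerivAt_id x).const_mul ((m : ℝ) * π)
    have h2 := h1.sin.div_const ((m : ℝ) * π)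
    rwa [mul_div_assoc, div_self hmp, mul_one] at h2
  have hu : ∀ x : ℝ, HasDerivAt θ (deriv θ x) x := fun x =>
    ((hθ.differentiable (by simp)) x).hasDerivAt
  have hibp := intervalIntegral.integral_mul_deriv_eq_deriv_mul (a := 0) (b := 1)
    (fun x _ => hu x) (fun x _ => hv x) (hd.intervalIntegrable _ _)
    ((by fun_prop : Continuous fun x : ℝ => Real.cos ((m : ℝ) * π * x)).intervalIntegrable _ _)
  have hs : Real.sin ((m : ℝ) * π * 1) = 0 := by simpa using Real.sin_int_mul_pi m
  have e : (∫ x in (0 : ℝ)..1, Real.cos ((m : ℝ) * π * x) * θ x)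
      = ∫ x in (0 : ℝ)..1, θ x * Real.cos ((m : ℝ) * π * x) := by
    simp only [mul_comm (θ _)]
  rw [e, hibp, hs]
  simp only [mul_zero, Real.sin_zero, zero_div, sub_zero, zero_sub, abs_neg]
  have hb := intervalIntegral.norm_integral_le_of_norm_le_const (a := (0 : ℝ)) (b := 1)
    (C := M / |(m : ℝ)|) (f := fun x => deriv θ x * (Real.sin ((m : ℝ) * π * x) / ((m : ℝ) * π)))
    (by
      intro x hx
      rw [Set.uIoc_of_le zero_le_one] at hx
      have h1 := hM x ⟨hx.1.le, hx.2⟩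
      have hpos : 0 < |(m : ℝ)| := abs_pos.mpr hm'
      rw [norm_mul, norm_div, div_eq_mul_inv M]
      refine mul_le_mul h1 ?_ (by positivity) hM0
      rw [Real.norm_eq_abs, Real.norm_eq_abs, abs_mul, abs_of_pos Real.pi_pos, ← one_div]
      have h3 : |(m : ℝ)| ≤ |(m : ℝ)| * π := by nlinarith [Real.pi_gt_three]
      exact div_le_div₀ zero_le_one (Real.abs_sin_le_one _) hpos h3)
  simpa using hb

lemma nr_sep (a b : ℕ) (h : a < b) : (2 : ℝ) ^ a + 2 ^ b ≤ 3 * (2 ^ b - 2 ^ a) := by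
  have : (2 : ℝ) ^ (a + 1) ≤ 2 ^ b := pow_le_pow_right₀ (by norm_num) h
  rw [pow_succ] at this
  linarith

lemma nr_coeff (θ : ℝ → ℝ) (hθ : ContDiff ℝ (⊤ : ℕ∞) θ) :
    ∃ C : ℝ, 0 ≤ C ∧ ∀ a b : ℕ, a ≠ b → |nrCoeff θ a b| * (2 ^ a + 2 ^ b) ≤ C := by
  obtain ⟨M, hM0, hM⟩ := nr_osc θ hθ
  refine ⟨2 * M, by positivity, fun a b hab => ?_⟩
  have hc := hθ.continuous
  have hsep : (2 : ℝ) ^ a + 2 ^ b ≤ 3 * |(2 : ℝ) ^ a - 2 ^ b| := by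
    rcases lt_or_gt_of_ne hab with h | h
    · have := nr_sep a b h
      have h2 := neg_le_abs ((2 : ℝ) ^ a - 2 ^ b)
      linarith
    · have := nr_sep b a h
      have h2 := le_abs_self ((2 : ℝ) ^ a - 2 ^ b)
      linarith
  have hS : (0 : ℝ) < 2 ^ a + 2 ^ b := by positivity
  have hD : (0 : ℝ) < |(2 : ℝ) ^ a - 2 ^ b| := by linarith
  have h1 := hM ((2 : ℤ) ^ a + 2 ^ b) (by positivity)
  have h2 := hM ((2 : ℤ) ^ a - 2 ^ b) (by
    intro h0
    have : (2 : ℝ) ^ a - 2 ^ b = 0 := by exact_mod_cast h0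
    rw [this] at hD
    simp at hD)
  push_cast at h1 h2
  have e : nrCoeff θ a b = ((∫ x in (0 : ℝ)..1, Real.cos (((2 : ℝ) ^ a + 2 ^ b) * π * x) * θ x)
      + ∫ x in (0 : ℝ)..1, Real.cos (((2 : ℝ) ^ a - 2 ^ b) * π * x) * θ x) / 2 := by
    rw [← intervalIntegral.integral_add
      ((by fun_prop : Continuous _).intervalIntegrable _ _)
      ((by fun_prop : Continuous _).intervalIntegrable _ _),
      ← intervalIntegral.integral_div]
    unfold nrCoeff
    congr 1
    ext x
    rw [show ((2 : ℝ) ^ a + 2 ^ b) * π * x = 2 ^ a * π * x + 2 ^ b * π * x by ring,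
      show ((2 : ℝ) ^ a - 2 ^ b) * π * x = 2 ^ a * π * x - 2 ^ b * π * x by ring,
      Real.cos_add, Real.cos_sub]
    ring
  rw [abs_of_pos hS] at h1
  have h3 : M / |(2 : ℝ) ^ a - 2 ^ b| ≤ 3 * M / (2 ^ a + 2 ^ b) := by
    rw [div_le_div_iff₀ hD hS]
    nlinarith
  rw [← le_div_iff₀ hS, e, abs_div, abs_two, div_le_iff₀ two_pos]
  refine (abs_add_le _ _).trans ((add_le_add h1 (h2.trans h3)).trans (le_of_eq ?_))
  ring

lemma nr_deriv (α : ℝ) (θ : ℝ → ℝ) (p : ℕ × ℕ) (y : ℝ) :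
    HasDerivAt (nrTerm α θ p) (nrTermDeriv α θ p y) y := by
  unfold nrTerm nrTermDeriv
  split_ifs with h
  · exact hasDerivAt_const _ _
  · have hl : ∀ c : ℝ, HasDerivAt (fun y : ℝ => Real.sin (c * y)) (Real.cos (c * y) * c) y := by
      intro c
      have h1 : HasDerivAt (fun x : ℝ => c * x) c y := by
        simpa using (hasDerivAt_id y).const_mul c
      exact h1.sin
    have := (((hl (2 ^ p.1 * π)).const_mul
      ((2 : ℝ) ^ (-(α * ((p.1 : ℝ) + (p.2 : ℝ)))) * nrCoeff θ p.1 p.2)).mul (hl (2 ^ p.2 * π)))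
    refine this.congr_deriv ?_
    ring

lemma nr_deriv_cont (α : ℝ) (θ : ℝ → ℝ) (p : ℕ × ℕ) : Continuous (nrTermDeriv α θ p) := by
  unfold nrTermDeriv
  split_ifs with h
  · exact continuous_const
  · fun_prop

lemma nr_summable (α : ℝ) (hα : 0 < α) :
    Summable fun p : ℕ × ℕ => (2 : ℝ) ^ (-(α * ((p.1 : ℝ) + (p.2 : ℝ)))) := by
  have h0 : (0 : ℝ) ≤ (2 : ℝ) ^ (-α) := by positivity
  have h1 : (2 : ℝ) ^ (-α) < 1 := Real.rpow_lt_one_of_one_lt_of_neg (by norm_num) (by linarith)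
  have hg := summable_geometric_of_lt_one h0 h1
  refine (hg.mul_of_nonneg hg (fun n => by positivity) (fun n => by positivity)).congr ?_
  intro p
  rw [← pow_add, ← Real.rpow_natCast, ← Real.rpow_mul (by norm_num)]
  push_cast
  congr 1
  ring

/-- The nonresonant double series `U_{NR}` converges uniformly on `[0,1]`, its term-by-term
derivative series converges uniformly on `[0,1]`, the sum is continuously differentiable on
`[0,1]` with derivative the sum of the derivative series, and the derivative at `0` is `0`. -/
theorem nonresonant_series_C1 (α : ℝ) (hα : 0 < α) (θ : ℝ → ℝ) (hθ : ContDiff ℝ (⊤ : ℕ∞) θ)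
    (hper : Function.Periodic θ 1) :
    ∃ V g : ℝ → ℝ,
      TendstoUniformlyOn (fun (s : Finset (ℕ × ℕ)) (y : ℝ) => ∑ p ∈ s, nrTerm α θ p y)
        V atTop (Set.Icc 0 1)
      ∧ TendstoUniformlyOn (fun (s : Finset (ℕ × ℕ)) (y : ℝ) => ∑ p ∈ s, nrTermDeriv α θ p y)
        g atTop (Set.Icc 0 1)
      ∧ (∀ y ∈ Set.Icc (0 : ℝ) 1, HasDerivAt V (g y) y)
      ∧ ContinuousOn g (Set.Icc 0 1)
      ∧ g 0 = 0 := by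
  obtain ⟨C, hC0, hC⟩ := nr_coeff θ hθ
  have hsum := (nr_summable α hα).mul_right (C * π)
  have hpi : (1 : ℝ) ≤ π := by linarith [Real.pi_gt_three]
  have hT : ∀ (p : ℕ × ℕ) (y : ℝ), ‖nrTerm α θ p y‖ ≤
      (2 : ℝ) ^ (-(α * ((p.1 : ℝ) + (p.2 : ℝ)))) * (C * π) := by
    intro p y
    unfold nrTerm
    split_ifs with h
    · rw [norm_zero]; positivity
    · have hc := hC p.1 p.2 h
      have h1 : (1 : ℝ) ≤ 2 ^ p.1 := one_le_pow₀ (by norm_num)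
      have h2 : (0 : ℝ) < 2 ^ p.2 := by positivity
      have hc1 : |nrCoeff θ p.1 p.2| ≤ C * π := by
        nlinarith [abs_nonneg (nrCoeff θ p.1 p.2)]
      rw [mul_assoc, mul_assoc, norm_mul, Real.norm_of_nonneg (by positivity)]
      refine mul_le_mul_of_nonneg_left ?_ (by positivity)
      rw [norm_mul, norm_mul]
      simp only [Real.norm_eq_abs]
      refine (mul_le_of_le_one_right (abs_nonneg _) ?_).trans hc1
      exact mul_le_one₀ (Real.abs_sin_le_one _) (abs_nonneg _) (Real.abs_sin_le_one _)
  have hT' : ∀ (p : ℕ × ℕ) (y : ℝ), ‖nrTermDeriv α θ p y‖ ≤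
      (2 : ℝ) ^ (-(α * ((p.1 : ℝ) + (p.2 : ℝ)))) * (C * π) := by
    intro p y
    unfold nrTermDeriv
    split_ifs with h
    · rw [norm_zero]; positivity
    · have hc := hC p.1 p.2 h
      rw [mul_assoc, norm_mul, Real.norm_of_nonneg (by positivity)]
      refine mul_le_mul_of_nonneg_left ?_ (by positivity)
      rw [norm_mul]
      simp only [Real.norm_eq_abs]
      have key : ∀ (c u v : ℝ), 0 ≤ c → |u| ≤ 1 → |v| ≤ 1 → |c * π * u * v| ≤ c * π := by
        intro c u v h0 hu hv
        rw [mul_assoc, abs_mul, abs_mul u, abs_of_nonneg (by positivity : 0 ≤ c * π)]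
        exact mul_le_of_le_one_right (by positivity) (mul_le_one₀ hu (abs_nonneg _) hv)
      have hb := (abs_add_le _ _).trans (add_le_add
        (key (2 ^ p.1) _ _ (by positivity) (Real.abs_cos_le_one (2 ^ p.1 * π * y))
          (Real.abs_sin_le_one (2 ^ p.2 * π * y)))
        (key (2 ^ p.2) _ _ (by positivity) (Real.abs_sin_le_one (2 ^ p.1 * π * y))
          (Real.abs_cos_le_one (2 ^ p.2 * π * y))))
      refine (mul_le_mul_of_nonneg_left hb (abs_nonneg _)).trans ?_
      rw [← add_mul, ← mul_assoc]
      exact mul_le_mul_of_nonneg_right hc Real.pi_pos.le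
  refine ⟨fun y => ∑' p, nrTerm α θ p y, fun y => ∑' p, nrTermDeriv α θ p y,
    tendstoUniformlyOn_tsum hsum (fun p y _ => hT p y),
    tendstoUniformlyOn_tsum hsum (fun p y _ => hT' p y), ?_, ?_, ?_⟩
  · intro y _
    exact hasDerivAt_tsum hsum (fun p y => nr_deriv α θ p y) hT'
      (y₀ := 0) (hsum.of_norm_bounded (fun p => hT p 0)) y
  · exact (continuous_tsum (nr_deriv_cont α θ) hsum hT').continuousOn
  · simp [nrTermDeriv]
end

section
/- Let α ∈ (0, 1/2] and let θ : ℝ → ℝ be a smooth 1-periodic function with ∫_0^1 θ(x) dx = 0. Then lim_{y → 0+} (1/y) U(y;θ) = 0; equivalently, since U(0;θ) = 0, the right derivative of U(·;θ) at y = 0 exists and equals 0. -/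
open Real Filter

lemma wz_decay (θ : ℝ → ℝ) (hθ : ContDiff ℝ (⊤ : ℕ∞) θ) :
    ∃ C : ℝ, 0 ≤ C ∧ ∀ m : ℤ, (m : ℝ) ^ 2 * |∫ x in (0 : ℝ)..1, Real.cos (m * π * x) * θ x| ≤ C := by
  have h1 : ContDiff ℝ (⊤ : ℕ∞) (deriv θ) := ContDiff.iterate_deriv 1 hθ
  have h2 : ContDiff ℝ (⊤ : ℕ∞) (deriv (deriv θ)) := ContDiff.iterate_deriv 1 h1
  have c0 := hθ.continuous
  have c1 := h1.continuous
  have c2 := h2.continuous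
  have d0 : Differentiable ℝ θ := hθ.differentiable (by simp)
  have d1 : Differentiable ℝ (deriv θ) := h1.differentiable (by simp)
  refine ⟨|deriv θ 1| + |deriv θ 0| + ∫ x in (0 : ℝ)..1, |deriv (deriv θ) x|, ?_, ?_⟩
  · have : 0 ≤ ∫ x in (0 : ℝ)..1, |deriv (deriv θ) x| :=
      intervalIntegral.integral_nonneg (by norm_num) (fun _ _ => abs_nonneg _)
    positivity
  intro m
  have hF : ∀ x : ℝ, HasDerivAt
      (fun x => (m * π) * (Real.sin (m * π * x) * θ x) + Real.cos (m * π * x) * deriv θ x)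
      ((m * π) ^ 2 * (Real.cos (m * π * x) * θ x) + Real.cos (m * π * x) * deriv (deriv θ) x) x := by
    intro x
    have hl : HasDerivAt (fun x : ℝ => m * π * x) (m * π) x := by
      simpa using (hasDerivAt_id x).const_mul ((m : ℝ) * π)
    have e := (((hl.sin.mul (d0 x).hasDerivAt).const_mul ((m : ℝ) * π)).add
      (hl.cos.mul (d1 x).hasDerivAt))
    refine HasDerivAt.congr_deriv (f := fun x => (m * π) * (Real.sin (m * π * x) * θ x) + Real.cos (m * π * x) * deriv θ x) e ?_
    ring
  have hI := intervalIntegral.integral_eq_sub_of_hasDerivAt (a := 0) (b := 1) (fun x _ => hF x)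
    (Continuous.intervalIntegrable (by fun_prop) _ _)
  rw [intervalIntegral.integral_add (Continuous.intervalIntegrable (by fun_prop) _ _)
    (Continuous.intervalIntegrable (by fun_prop) _ _), intervalIntegral.integral_const_mul] at hI
  simp only [mul_one, mul_zero, Real.sin_zero, Real.cos_zero, Real.sin_int_mul_pi, zero_mul,
    zero_add, one_mul] at hI
  set I := ∫ x in (0 : ℝ)..1, Real.cos (m * π * x) * θ x
  have hJ : |∫ x in (0 : ℝ)..1, Real.cos (m * π * x) * deriv (deriv θ) x| ≤
      ∫ x in (0 : ℝ)..1, |deriv (deriv θ) x| := by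
    refine (intervalIntegral.abs_integral_le_integral_abs (by norm_num)).trans ?_
    refine intervalIntegral.integral_mono_on (by norm_num)
      (Continuous.intervalIntegrable (by fun_prop) _ _)
      (Continuous.intervalIntegrable (by fun_prop) _ _) ?_
    intro x _
    rw [abs_mul]
    exact mul_le_of_le_one_left (abs_nonneg _) (Real.abs_cos_le_one _)
  set J := ∫ x in (0 : ℝ)..1, Real.cos (m * π * x) * deriv (deriv θ) x
  have hc : |Real.cos (m * π) * deriv θ 1| ≤ |deriv θ 1| := by
    rw [abs_mul]
    exact mul_le_of_le_one_left (abs_nonneg _) (Real.abs_cos_le_one _)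
  have hK : (m * π) ^ 2 * |I| ≤ |deriv θ 1| + |deriv θ 0| + ∫ x in (0 : ℝ)..1, |deriv (deriv θ) x| := by
    have : (m * π) ^ 2 * |I| = |Real.cos (m * π) * deriv θ 1 - deriv θ 0 - J| := by
      rw [← hI, add_sub_cancel_right, abs_mul, abs_of_nonneg (sq_nonneg ((m : ℝ) * π))]
    rw [this]
    have := abs_sub (Real.cos (m * π) * deriv θ 1 - deriv θ 0) J
    have := abs_sub (Real.cos (m * π) * deriv θ 1) (deriv θ 0)
    linarith
  refine le_trans ?_ hK
  refine mul_le_mul_of_nonneg_right ?_ (abs_nonneg _)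
  rw [mul_pow]
  have : (1 : ℝ) ≤ π ^ 2 := by nlinarith [Real.pi_gt_three]
  nlinarith [sq_nonneg (m : ℝ)]

lemma wz_aux (j k : ℕ) (h : k < j) : (2 : ℝ) ^ j * 2 ^ k ≤ 2 * (2 ^ j - 2 ^ k) ^ 2 := by
  have h1 : (2 : ℝ) * 2 ^ k ≤ 2 ^ j := by
    rw [← pow_succ']
    exact pow_le_pow_right₀ (by norm_num) h
  have h0 : (0 : ℝ) < 2 ^ k := by positivity
  nlinarith [mul_nonneg (sub_nonneg.2 h1) h0.le, sq_nonneg ((2 : ℝ) ^ j - 2 * 2 ^ k)]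

lemma wz_coef (θ : ℝ → ℝ) (hθ : ContDiff ℝ (⊤ : ℕ∞) θ) (hmean : (∫ x in (0 : ℝ)..1, θ x) = 0) :
    ∃ C : ℝ, 0 ≤ C ∧ ∀ j k : ℕ, (2 : ℝ) ^ j * 2 ^ k *
      |∫ x in (0 : ℝ)..1, Real.cos (2 ^ j * π * x) * Real.cos (2 ^ k * π * x) * θ x| ≤ C := by
  obtain ⟨C, hC, h⟩ := wz_decay θ hθ
  have c0 := hθ.continuous
  refine ⟨2 * C, by positivity, fun j k => ?_⟩
  have hs := h (2 ^ j + 2 ^ k)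
  have hd := h (2 ^ j - 2 ^ k)
  push_cast at hs hd
  have e : (∫ x in (0 : ℝ)..1, Real.cos (2 ^ j * π * x) * Real.cos (2 ^ k * π * x) * θ x) =
      (1 / 2) * ((∫ x in (0 : ℝ)..1, Real.cos ((2 ^ j - 2 ^ k) * π * x) * θ x) +
        ∫ x in (0 : ℝ)..1, Real.cos ((2 ^ j + 2 ^ k) * π * x) * θ x) := by
    rw [← intervalIntegral.integral_add (Continuous.intervalIntegrable (by fun_prop) _ _)
      (Continuous.intervalIntegrable (by fun_prop) _ _), ← intervalIntegral.integral_const_mul]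
    congr 1
    ext x
    rw [show ((2 : ℝ) ^ j - 2 ^ k) * π * x = 2 ^ j * π * x - 2 ^ k * π * x by ring,
      show ((2 : ℝ) ^ j + 2 ^ k) * π * x = 2 ^ j * π * x + 2 ^ k * π * x by ring,
      Real.cos_add, Real.cos_sub]
    ring
  rw [e]
  have hd' : (2 : ℝ) ^ j * 2 ^ k *
      |∫ x in (0 : ℝ)..1, Real.cos ((2 ^ j - 2 ^ k) * π * x) * θ x| ≤ 2 * C := by
    rcases lt_trichotomy j k with hjk | hjk | hjk
    · have := mul_le_mul_of_nonneg_right (wz_aux k j hjk)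
        (abs_nonneg (∫ x in (0 : ℝ)..1, Real.cos ((2 ^ j - 2 ^ k) * π * x) * θ x))
      nlinarith
    · subst hjk
      simp [hmean, hC]
    · have := mul_le_mul_of_nonneg_right (wz_aux j k hjk)
        (abs_nonneg (∫ x in (0 : ℝ)..1, Real.cos ((2 ^ j - 2 ^ k) * π * x) * θ x))
      nlinarith
  set D := ∫ x in (0 : ℝ)..1, Real.cos ((2 ^ j - 2 ^ k) * π * x) * θ x
  set S := ∫ x in (0 : ℝ)..1, Real.cos ((2 ^ j + 2 ^ k) * π * x) * θ x
  have hj0 : (0 : ℝ) < 2 ^ j := by positivity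
  have hk0 : (0 : ℝ) < 2 ^ k := by positivity
  have hs' : (2 : ℝ) ^ j * 2 ^ k * |S| ≤ C := by
    refine le_trans (mul_le_mul_of_nonneg_right ?_ (abs_nonneg _)) hs
    nlinarith
  have ha : |1 / 2 * (D + S)| ≤ 1 / 2 * (|D| + |S|) := by
    rw [abs_mul, abs_of_nonneg (by norm_num : (0 : ℝ) ≤ 1 / 2)]
    have := abs_add_le D S
    linarith
  have := mul_le_mul_of_nonneg_left ha (mul_pos hj0 hk0).le
  nlinarith

lemma wz_summable (α : ℝ) (hα : 0 < α) : Summable fun k : ℕ => (2 : ℝ) ^ (-(α * (k : ℝ))) := by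
  have : (fun k : ℕ => (2 : ℝ) ^ (-(α * (k : ℝ)))) = fun k : ℕ => ((2 : ℝ) ^ (-α)) ^ k := by
    ext k
    rw [← Real.rpow_natCast, ← Real.rpow_mul (by norm_num)]
    congr 1
    ring
  rw [this]
  exact summable_geometric_of_lt_one (by positivity)
    (Real.rpow_lt_one_of_one_lt_of_neg (by norm_num) (by linarith))

lemma wz_bound (α : ℝ) (hα : 0 < α) (θ : ℝ → ℝ) (hθ : ContDiff ℝ (⊤ : ℕ∞) θ)
    (hmean : (∫ x in (0 : ℝ)..1, θ x) = 0) :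
    ∃ K : ℝ, ∀ y : ℝ, |weierstrassU α θ y| ≤ K * y ^ 2 := by
  obtain ⟨C, hC, h⟩ := wz_coef θ hθ hmean
  have c0 := hθ.continuous
  have hsum := wz_summable α hα
  set a : ℕ → ℝ := fun k => (2 : ℝ) ^ (-(α * (k : ℝ))) with ha
  have ha0 : ∀ k, 0 ≤ a k := fun k => by simp only [ha]; positivity
  set A := ∑' k, a k with hA
  have hA0 : 0 ≤ A := tsum_nonneg ha0
  refine ⟨C * π ^ 2 * A ^ 2, fun y => ?_⟩
  set f : ℕ → ℝ → ℝ := fun k x => a k * Real.cos (2 ^ k * π * x) * Real.sin (2 ^ k * π * y) with hf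
  have hfb : ∀ k x, |f k x| ≤ a k := by
    intro k x
    simp only [hf, abs_mul, abs_of_nonneg (ha0 k)]
    have h1 := Real.abs_cos_le_one (2 ^ k * π * x)
    have h2 := Real.abs_sin_le_one (2 ^ k * π * y)
    calc a k * |Real.cos (2 ^ k * π * x)| * |Real.sin (2 ^ k * π * y)| ≤ a k * 1 * 1 := by
          have := ha0 k
          gcongr
      _ = a k := by ring
  have hfs : ∀ x, Summable fun k => f k x := fun x =>
    Summable.of_norm_bounded hsum (fun k => hfb k x)
  have hfc : ∀ k, Continuous (f k) := fun k => by simp only [hf]; fun_prop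
  have hlim : Tendsto (fun n => ∫ x in (0 : ℝ)..1, (∑ k ∈ Finset.range n, f k x) ^ 2 * θ x) atTop
      (nhds (weierstrassU α θ y)) := by
    unfold weierstrassU
    refine intervalIntegral.tendsto_integral_filter_of_dominated_convergence
      (fun x => A ^ 2 * |θ x|) ?_ ?_ ?_ ?_
    · refine Eventually.of_forall fun n => Continuous.aestronglyMeasurable (by fun_prop)
    · refine Eventually.of_forall fun n => Eventually.of_forall fun x _ => ?_
      rw [Real.norm_eq_abs, abs_mul, abs_pow]
      have : |∑ k ∈ Finset.range n, f k x| ≤ A :=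
        (Finset.abs_sum_le_sum_abs _ _).trans
          ((Finset.sum_le_sum fun k _ => hfb k x).trans (hsum.sum_le_tsum _ fun k _ => ha0 k))
      gcongr
    · exact Continuous.intervalIntegrable (by fun_prop) _ _
    · refine Eventually.of_forall fun x _ => ?_
      exact ((hfs x).hasSum.tendsto_sum_nat.pow 2).mul_const _
  refine le_of_tendsto hlim.abs (Eventually.of_forall fun n => ?_)
  have hsin : ∀ k : ℕ, |Real.sin (2 ^ k * π * y)| ≤ 2 ^ k * π * |y| := fun k => by
    refine (Real.abs_sin_le_abs).trans (le_of_eq ?_)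
    rw [abs_mul, abs_of_nonneg (by positivity)]
  have hexp : (∫ x in (0 : ℝ)..1, (∑ k ∈ Finset.range n, f k x) ^ 2 * θ x) =
      ∑ j ∈ Finset.range n, ∑ k ∈ Finset.range n,
        ((a j * Real.sin (2 ^ j * π * y)) * (a k * Real.sin (2 ^ k * π * y))) *
        ∫ x in (0 : ℝ)..1, Real.cos (2 ^ j * π * x) * Real.cos (2 ^ k * π * x) * θ x := by
    simp_rw [← intervalIntegral.integral_const_mul]
    simp_rw [sq, Finset.sum_mul_sum, Finset.sum_mul]
    rw [intervalIntegral.integral_finsetSum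
      (fun j _ => Continuous.intervalIntegrable (by fun_prop) _ _)]
    refine Finset.sum_congr rfl fun j _ => ?_
    rw [intervalIntegral.integral_finsetSum
      (fun j _ => Continuous.intervalIntegrable (by fun_prop) _ _)]
    refine Finset.sum_congr rfl fun k _ => ?_
    congr 1
    ext x
    simp only [hf]
    ring
  rw [hexp]
  have hterm : ∀ j k : ℕ, |((a j * Real.sin (2 ^ j * π * y)) * (a k * Real.sin (2 ^ k * π * y))) *
        ∫ x in (0 : ℝ)..1, Real.cos (2 ^ j * π * x) * Real.cos (2 ^ k * π * x) * θ x| ≤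
        (C * π ^ 2 * y ^ 2) * (a j * a k) := by
    intro j k
    have hjk := h j k
    set I := ∫ x in (0 : ℝ)..1, Real.cos (2 ^ j * π * x) * Real.cos (2 ^ k * π * x) * θ x
    rw [abs_mul, abs_mul, abs_mul, abs_mul, abs_of_nonneg (ha0 j), abs_of_nonneg (ha0 k)]
    have hj := ha0 j
    have hk := ha0 k
    calc a j * |Real.sin (2 ^ j * π * y)| * (a k * |Real.sin (2 ^ k * π * y)|) * |I|
        ≤ a j * (2 ^ j * π * |y|) * (a k * (2 ^ k * π * |y|)) * |I| := by
          gcongr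
          · exact hsin j
          · exact hsin k
      _ = (2 ^ j * 2 ^ k * |I|) * (π ^ 2 * |y| ^ 2 * (a j * a k)) := by ring
      _ ≤ C * (π ^ 2 * |y| ^ 2 * (a j * a k)) := by gcongr
      _ = _ := by rw [sq_abs]; ring
  calc _ ≤ ∑ j ∈ Finset.range n, ∑ k ∈ Finset.range n, (C * π ^ 2 * y ^ 2) * (a j * a k) :=
        (Finset.abs_sum_le_sum_abs _ _).trans (Finset.sum_le_sum fun j _ =>
          (Finset.abs_sum_le_sum_abs _ _).trans (Finset.sum_le_sum fun k _ => hterm j k))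
    _ = (C * π ^ 2 * y ^ 2) * (∑ j ∈ Finset.range n, a j) ^ 2 := by
        rw [sq (∑ j ∈ Finset.range n, a j), Finset.sum_mul_sum]
        simp_rw [Finset.mul_sum]
    _ ≤ (C * π ^ 2 * y ^ 2) * A ^ 2 := by
        have : ∑ j ∈ Finset.range n, a j ≤ A := hsum.sum_le_tsum _ fun k _ => ha0 k
        have := Finset.sum_nonneg (s := Finset.range n) fun k _ => ha0 k
        gcongr
    _ = _ := by ring

/-- For `α ∈ (0,1/2]` and a smooth `1`-periodic `θ` with zero mean, the right derivative of
`U(·;θ)` at `y = 0` exists and equals `0`: `lim_{y→0+} U(y;θ)/y = 0`. -/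
theorem weierstrassU_zeroMean_rightDeriv (α : ℝ) (hα : α ∈ Set.Ioc (0 : ℝ) (1 / 2))
    (θ : ℝ → ℝ) (hθ : ContDiff ℝ (⊤ : ℕ∞) θ) (hper : Function.Periodic θ 1)
    (hmean : (∫ x in (0 : ℝ)..1, θ x) = 0) :
    Tendsto (fun y => weierstrassU α θ y / y) (nhdsWithin 0 (Set.Ioi 0)) (nhds 0) := by
  obtain ⟨K, hK⟩ := wz_bound α hα.1 θ hθ hmean
  have hlim : Tendsto (fun y : ℝ => K * y) (nhdsWithin 0 (Set.Ioi 0)) (nhds 0) := by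
    have : Tendsto (fun y : ℝ => K * y) (nhds 0) (nhds (K * 0)) :=
      (continuous_const.mul continuous_id).tendsto 0
    rw [mul_zero] at this
    exact this.mono_left nhdsWithin_le_nhds
  refine squeeze_zero_norm' ?_ hlim
  filter_upwards [self_mem_nhdsWithin] with y hy
  have hy' : (0 : ℝ) < y := hy
  rw [Real.norm_eq_abs, abs_div, abs_of_pos hy', div_le_iff₀ hy']
  have := hK y
  nlinarith
end

section
/- Let 0 < α < 1/2 and let θ : ℝ → ℝ be a smooth 1-periodic function with ∫_0^1 θ(x) dx ≠ 0. Then 2^n |U(2^{−n};θ)| → +∞ as n → ∞. Consequently, since U(0;θ) = 0, the limit lim_{y → 0+} (1/y) U(y;θ) does not exist (as a finite number), i.e. the function y ↦ U(y;θ) has no right derivative at y = 0. -/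
open Real Filter

lemma wU_osc (θ : ℝ → ℝ) (hθ : ContDiff ℝ (⊤ : ℕ∞) θ) :
    ∃ B : ℝ, 0 ≤ B ∧ ∀ m : ℤ, m ≠ 0 →
      |∫ x in (0 : ℝ)..1, cos (m * π * x) * θ x| ≤ B / |(m : ℝ)| := by
  have hd : Continuous (deriv θ) := hθ.continuous_deriv (by simp)
  obtain ⟨B, hB⟩ := (isCompact_Icc (a := (0 : ℝ)) (b := 1)).exists_bound_of_continuousOn
    hd.continuousOn
  have hB0 : 0 ≤ B := (norm_nonneg _).trans (hB 0 (by simp))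
  refine ⟨B, hB0, fun m hm => ?_⟩
  have hmR : (m : ℝ) ≠ 0 := by exact_mod_cast hm
  have hmp : 0 < |(m : ℝ)| := abs_pos.mpr hmR
  have hmpi : (m : ℝ) * π ≠ 0 := mul_ne_zero hmR pi_ne_zero
  have key := intervalIntegral.integral_mul_deriv_eq_deriv_mul (a := 0) (b := 1)
    (u := θ) (u' := deriv θ) (v := fun x => sin (m * π * x) / (m * π))
    (v' := fun x => cos (m * π * x))
    (fun x _ => (hθ.differentiable (by simp) x).hasDerivAt)
    (fun x _ => by
      have h := ((hasDerivAt_id x).const_mul ((m : ℝ) * π)).sin.div_const ((m : ℝ) * π)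
      convert h using 1
      simp only [id]
      field_simp
      rfl)
    (hd.intervalIntegrable _ _)
    ((by fun_prop : Continuous fun x : ℝ => cos (m * π * x)).intervalIntegrable _ _)
  simp only [mul_one, mul_zero, sin_zero, zero_div, sin_int_mul_pi, sub_zero, zero_sub] at key
  have e : (∫ x in (0 : ℝ)..1, cos (m * π * x) * θ x)
      = ∫ x in (0 : ℝ)..1, θ x * cos (m * π * x) := by simp only [mul_comm]
  rw [e, key, abs_neg]
  have := intervalIntegral.norm_integral_le_of_norm_le_const (a := (0 : ℝ)) (b := 1)
    (C := B / |(m : ℝ)|) (f := fun x => deriv θ x * (sin (m * π * x) / (m * π))) ?_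
  · simpa using this
  · intro x hx
    rw [Set.uIoc_of_le zero_le_one] at hx
    rw [norm_mul, norm_div, norm_mul, Real.norm_eq_abs (m : ℝ), div_eq_mul_inv B]
    have h1 := hB x ⟨hx.1.le, hx.2⟩
    have h2 : ‖sin (m * π * x)‖ / (|(m : ℝ)| * ‖π‖) ≤ |(m : ℝ)|⁻¹ := by
      rw [div_le_iff₀ (by simp [hmR, pi_ne_zero]), inv_mul_cancel_left₀ hmp.ne']
      calc ‖sin (m * π * x)‖ ≤ 1 := abs_sin_le_one _
        _ ≤ ‖π‖ := by rw [Real.norm_of_nonneg pi_pos.le]; linarith [pi_gt_three]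
    gcongr

lemma wU_pair (θ : ℝ → ℝ) (hθ : ContDiff ℝ (⊤ : ℕ∞) θ) :
    ∃ K : ℝ, 0 ≤ K ∧ ∀ j k : ℕ,
      |(∫ x in (0 : ℝ)..1, cos (2 ^ j * π * x) * cos (2 ^ k * π * x) * θ x)
        - (if j = k then (∫ x in (0 : ℝ)..1, θ x) / 2 else 0)| ≤ K / 2 ^ k := by
  obtain ⟨B, hB0, hB⟩ := wU_osc θ hθ
  have hc : Continuous θ := hθ.continuous
  refine ⟨2 * B, by positivity, fun j k => ?_⟩
  have hp : ∀ i : ℕ, (0 : ℝ) < 2 ^ i := fun i => by positivity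
  have e : (∫ x in (0 : ℝ)..1, cos (2 ^ j * π * x) * cos (2 ^ k * π * x) * θ x)
      = (∫ x in (0 : ℝ)..1, cos (((2 ^ j + 2 ^ k : ℤ) : ℝ) * π * x) * θ x) / 2
      + (∫ x in (0 : ℝ)..1, cos (((2 ^ j - 2 ^ k : ℤ) : ℝ) * π * x) * θ x) / 2 := by
    rw [← add_div, ← intervalIntegral.integral_add
      ((by fun_prop : Continuous _).intervalIntegrable _ _)
      ((by fun_prop : Continuous _).intervalIntegrable _ _), ← intervalIntegral.integral_div]
    congr 1
    ext x
    push_cast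
    rw [show ((2 : ℝ) ^ j + 2 ^ k) * π * x = 2 ^ j * π * x + 2 ^ k * π * x by ring,
      show ((2 : ℝ) ^ j - 2 ^ k) * π * x = 2 ^ j * π * x - 2 ^ k * π * x by ring, cos_add, cos_sub]
    ring
  have h1 : |∫ x in (0 : ℝ)..1, cos (((2 ^ j + 2 ^ k : ℤ) : ℝ) * π * x) * θ x| ≤ B / 2 ^ k := by
    refine (hB _ (by positivity)).trans ?_
    push_cast
    rw [abs_of_pos (by positivity)]
    gcongr
    linarith [hp j]
  have hBk : 0 ≤ B / 2 ^ k := by positivity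
  rw [e]
  by_cases hjk : j = k
  · subst hjk
    simp only [sub_self, Int.cast_zero, zero_mul, cos_zero, one_mul, if_true]
    rw [add_sub_cancel_right, abs_div, abs_two, mul_div_assoc]
    linarith
  · have hlow : (2 : ℝ) ^ k / 2 ≤ |(2 : ℝ) ^ j - 2 ^ k| := by
      rcases lt_or_gt_of_ne hjk with h | h
      · have : (2 : ℝ) ^ (j + 1) ≤ 2 ^ k := pow_le_pow_right₀ one_le_two h
        rw [pow_succ] at this
        rw [abs_sub_comm]
        exact le_trans (by linarith) (le_abs_self _)
      · have : (2 : ℝ) ^ (k + 1) ≤ 2 ^ j := pow_le_pow_right₀ one_le_two h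
        rw [pow_succ] at this
        exact le_trans (by linarith [hp k]) (le_abs_self _)
    have hne : (2 ^ j - 2 ^ k : ℤ) ≠ 0 := by
      intro h0
      have h0' : (2 : ℝ) ^ j - 2 ^ k = 0 := by exact_mod_cast h0
      rw [h0', abs_zero] at hlow
      linarith [hp k]
    have h2 : |∫ x in (0 : ℝ)..1, cos (((2 ^ j - 2 ^ k : ℤ) : ℝ) * π * x) * θ x|
        ≤ B / (2 ^ k / 2) := by
      refine (hB _ hne).trans ?_
      push_cast
      gcongr
    have h3 : B / (2 ^ k / 2) = 2 * (B / 2 ^ k) := by field_simp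
    rw [h3] at h2
    rw [if_neg hjk, sub_zero, mul_div_assoc]
    rw [abs_le] at *
    constructor <;> linarith [h1.1, h1.2, h2.1, h2.2]

/-- The coefficients of `u₂(·, 2^{-n})`. -/
noncomputable def wUc (α : ℝ) (n k : ℕ) : ℝ :=
  (2 : ℝ) ^ (-(α * (k : ℝ))) * sin (2 ^ k * π * (2 : ℝ) ^ (-(n : ℝ)))

lemma wU_u2 (α : ℝ) (n : ℕ) (x : ℝ) :
    weierstrassU2 α x ((2 : ℝ) ^ (-(n : ℝ)))
      = ∑ k ∈ Finset.range n, wUc α n k * cos (2 ^ k * π * x) := by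
  unfold weierstrassU2
  rw [tsum_eq_sum (s := Finset.range n)]
  · exact Finset.sum_congr rfl fun k _ => by unfold wUc; ring
  · intro k hk
    have hnk : n ≤ k := by simpa using hk
    obtain ⟨d, rfl⟩ := Nat.exists_eq_add_of_le hnk
    have : (2 : ℝ) ^ (n + d) * π * (2 : ℝ) ^ (-(n : ℝ)) = ((2 ^ d : ℕ) : ℝ) * π := by
      rw [rpow_neg two_pos.le, rpow_natCast, pow_add]
      push_cast
      field_simp
    rw [this, sin_nat_mul_pi, mul_zero]

lemma wU_expand (α : ℝ) (θ : ℝ → ℝ) (hc : Continuous θ) (n : ℕ) :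
    weierstrassU α θ ((2 : ℝ) ^ (-(n : ℝ)))
      = ∑ j ∈ Finset.range n, ∑ k ∈ Finset.range n, wUc α n j * wUc α n k *
        ∫ x in (0 : ℝ)..1, cos (2 ^ j * π * x) * cos (2 ^ k * π * x) * θ x := by
  unfold weierstrassU
  simp only [wU_u2, ← intervalIntegral.integral_const_mul]
  rw [show (∑ j ∈ Finset.range n, ∑ k ∈ Finset.range n, ∫ x in (0 : ℝ)..1, wUc α n j * wUc α n k *
        (cos (2 ^ j * π * x) * cos (2 ^ k * π * x) * θ x))
      = ∑ j ∈ Finset.range n, ∫ x in (0 : ℝ)..1, ∑ k ∈ Finset.range n, wUc α n j * wUc α n k *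
        (cos (2 ^ j * π * x) * cos (2 ^ k * π * x) * θ x) from
      Finset.sum_congr rfl fun j _ => (intervalIntegral.integral_finset_sum fun k _ =>
        (by fun_prop : Continuous _).intervalIntegrable _ _).symm]
  rw [← intervalIntegral.integral_finset_sum fun k _ =>
        (by fun_prop : Continuous _).intervalIntegrable _ _]
  congr 1
  ext x
  rw [sq, Finset.sum_mul_sum, Finset.sum_mul]
  refine Finset.sum_congr rfl fun j _ => ?_
  rw [Finset.sum_mul]
  exact Finset.sum_congr rfl fun k _ => by ring

lemma wUc_bound1 (α : ℝ) (n k : ℕ) :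
    |wUc α n k| ≤ (2 : ℝ) ^ (-(α * (k : ℝ))) * (2 ^ k * π / 2 ^ n) := by
  unfold wUc
  rw [abs_mul, abs_of_pos (by positivity)]
  gcongr
  refine abs_sin_le_abs.trans ?_
  rw [abs_of_pos (by positivity), rpow_neg two_pos.le, rpow_natCast, div_eq_mul_inv]

lemma wUc_prod (α : ℝ) (h1 : 0 < α) (h2 : α < 1 / 2) (n j k : ℕ) (hj : j < n) :
    2 ^ n * (|wUc α n j| * |wUc α n k| / 2 ^ k) ≤ π ^ 2 * ((2 : ℝ) ^ (-α)) ^ n := by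
  have hk1 : (2 : ℝ) ^ (-(α * (k : ℝ))) ≤ 1 :=
    rpow_le_one_of_one_le_of_nonpos one_le_two (by
      have : 0 ≤ α * (k : ℝ) := by positivity
      linarith)
  have hj1 : (2 : ℝ) ^ (-(α * (j : ℝ))) * 2 ^ j ≤ ((2 : ℝ) ^ (-α)) ^ n * 2 ^ n := by
    rw [← rpow_natCast, ← rpow_natCast, ← rpow_natCast, ← rpow_mul two_pos.le,
      ← rpow_add two_pos, ← rpow_add two_pos]
    apply rpow_le_rpow_of_exponent_le one_le_two
    have : (j : ℝ) ≤ n := by exact_mod_cast hj.le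
    nlinarith
  calc 2 ^ n * (|wUc α n j| * |wUc α n k| / 2 ^ k)
      ≤ 2 ^ n * (((2 : ℝ) ^ (-(α * (j : ℝ))) * (2 ^ j * π / 2 ^ n)) *
        ((2 : ℝ) ^ (-(α * (k : ℝ))) * (2 ^ k * π / 2 ^ n)) / 2 ^ k) := by
        gcongr <;> exact wUc_bound1 _ _ _
    _ = ((2 : ℝ) ^ (-(α * (j : ℝ))) * 2 ^ j) * (2 : ℝ) ^ (-(α * (k : ℝ))) * (π ^ 2 / 2 ^ n) := by
        field_simp
    _ ≤ (((2 : ℝ) ^ (-α)) ^ n * 2 ^ n) * 1 * (π ^ 2 / 2 ^ n) := by gcongr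
    _ = π ^ 2 * ((2 : ℝ) ^ (-α)) ^ n := by field_simp

lemma wU_err (α : ℝ) (h1 : 0 < α) (h2 : α < 1 / 2) (θ : ℝ → ℝ) (hθ : ContDiff ℝ (⊤ : ℕ∞) θ) :
    ∃ K : ℝ, ∀ n : ℕ, 2 ^ n * |weierstrassU α θ ((2 : ℝ) ^ (-(n : ℝ)))
      - (∫ x in (0 : ℝ)..1, θ x) / 2 * ∑ k ∈ Finset.range n, wUc α n k ^ 2|
      ≤ K * (n ^ 2 * ((2 : ℝ) ^ (-α)) ^ n) := by
  obtain ⟨K, hK0, hK⟩ := wU_pair θ hθ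
  refine ⟨K * π ^ 2, fun n => ?_⟩
  set M := ∫ x in (0 : ℝ)..1, θ x
  have e : M / 2 * ∑ k ∈ Finset.range n, wUc α n k ^ 2
      = ∑ j ∈ Finset.range n, ∑ k ∈ Finset.range n, wUc α n j * wUc α n k *
        (if j = k then M / 2 else 0) := by
    rw [Finset.mul_sum]
    refine Finset.sum_congr rfl fun j hj => ?_
    simp only [mul_ite, mul_zero, Finset.sum_ite_eq, hj, if_true]
    ring
  rw [wU_expand α θ hθ.continuous, e, ← Finset.sum_sub_distrib]
  simp only [← Finset.sum_sub_distrib, ← mul_sub]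
  have hb : ∀ j ∈ Finset.range n, ∀ k ∈ Finset.range n,
      2 ^ n * |wUc α n j * wUc α n k *
        ((∫ x in (0 : ℝ)..1, cos (2 ^ j * π * x) * cos (2 ^ k * π * x) * θ x)
        - (if j = k then M / 2 else 0))| ≤ K * π ^ 2 * ((2 : ℝ) ^ (-α)) ^ n := by
    intro j hj k _
    rw [abs_mul, abs_mul]
    calc _ ≤ 2 ^ n * (|wUc α n j| * |wUc α n k| * (K / 2 ^ k)) := by
          gcongr
          exact hK j k
      _ = K * (2 ^ n * (|wUc α n j| * |wUc α n k| / 2 ^ k)) := by ring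
      _ ≤ K * (π ^ 2 * ((2 : ℝ) ^ (-α)) ^ n) := by
          exact mul_le_mul_of_nonneg_left (wUc_prod α h1 h2 n j k (by simpa using hj)) hK0
      _ = _ := by ring
  calc _ ≤ 2 ^ n * ∑ j ∈ Finset.range n, ∑ k ∈ Finset.range n, |wUc α n j * wUc α n k *
        ((∫ x in (0 : ℝ)..1, cos (2 ^ j * π * x) * cos (2 ^ k * π * x) * θ x)
        - (if j = k then M / 2 else 0))| := by
        gcongr
        exact (Finset.abs_sum_le_sum_abs _ _).trans
          (Finset.sum_le_sum fun j _ => Finset.abs_sum_le_sum_abs _ _)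
    _ ≤ ∑ j ∈ Finset.range n, ∑ k ∈ Finset.range n, K * π ^ 2 * ((2 : ℝ) ^ (-α)) ^ n := by
        simp only [Finset.mul_sum]
        exact Finset.sum_le_sum fun j hj => Finset.sum_le_sum fun k hk => hb j hj k hk
    _ = _ := by
        simp only [Finset.sum_const, Finset.card_range, nsmul_eq_mul]
        ring

lemma wU_main_lower (α : ℝ) (h1 : 0 < α) (n : ℕ) (hn : 1 ≤ n) :
    ((2 : ℝ) ^ (1 - 2 * α)) ^ n ≤ 2 ^ n * ∑ k ∈ Finset.range n, wUc α n k ^ 2 := by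
  obtain ⟨m, rfl⟩ := Nat.exists_eq_add_of_le' hn
  have h : wUc α (m + 1) m ^ 2 ≤ ∑ k ∈ Finset.range (m + 1), wUc α (m + 1) k ^ 2 :=
    Finset.single_le_sum (f := fun k => wUc α (m + 1) k ^ 2) (fun _ _ => sq_nonneg _) (by simp)
  have hv : wUc α (m + 1) m = (2 : ℝ) ^ (-(α * (m : ℝ))) := by
    unfold wUc
    have : (2 : ℝ) ^ m * π * (2 : ℝ) ^ (-((m + 1 : ℕ) : ℝ)) = π / 2 := by
      rw [rpow_neg two_pos.le, rpow_natCast, pow_succ]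
      field_simp
    rw [this, sin_pi_div_two, mul_one]
  refine le_trans ?_ (mul_le_mul_of_nonneg_left h (by positivity))
  rw [hv, ← rpow_natCast, ← rpow_natCast, ← rpow_natCast, ← rpow_mul two_pos.le,
    ← rpow_mul two_pos.le, ← rpow_add two_pos]
  apply rpow_le_rpow_of_exponent_le one_le_two
  push_cast
  nlinarith

lemma wU_first (α : ℝ) (h1 : 0 < α) (h2 : α < 1 / 2)
    (θ : ℝ → ℝ) (hθ : ContDiff ℝ (⊤ : ℕ∞) θ)
    (hmean : (∫ x in (0 : ℝ)..1, θ x) ≠ 0) :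
    Tendsto (fun n : ℕ => (2 : ℝ) ^ n * |weierstrassU α θ ((2 : ℝ) ^ (-(n : ℝ)))|) atTop atTop := by
  obtain ⟨K, hK⟩ := wU_err α h1 h2 θ hθ
  set M := ∫ x in (0 : ℝ)..1, θ x
  have hM : 0 < |M| / 2 := by positivity
  have t1 : Tendsto (fun n : ℕ => |M| / 2 * ((2 : ℝ) ^ (1 - 2 * α)) ^ n) atTop atTop :=
    (tendsto_pow_atTop_atTop_of_one_lt
      (one_lt_rpow one_lt_two (by linarith))).const_mul_atTop hM
  have t2 : Tendsto (fun n : ℕ => -(K * ((n : ℝ) ^ 2 * ((2 : ℝ) ^ (-α)) ^ n))) atTop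
      (nhds (-(K * 0))) :=
    ((tendsto_pow_const_mul_const_pow_of_lt_one 2 (by positivity)
      (rpow_lt_one_of_one_lt_of_neg one_lt_two (by linarith))).const_mul K).neg
  refine tendsto_atTop_mono' _ ?_ (t1.atTop_add t2)
  filter_upwards [eventually_ge_atTop 1] with n hn
  have hl := wU_main_lower α h1 n hn
  have he := hK n
  set U := weierstrassU α θ ((2 : ℝ) ^ (-(n : ℝ)))
  set S := ∑ k ∈ Finset.range n, wUc α n k ^ 2
  have hS : 0 ≤ S := Finset.sum_nonneg fun _ _ => sq_nonneg _
  have h3 : |M / 2 * S| - |U - M / 2 * S| ≤ |U| := by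
    have := abs_sub_abs_le_abs_sub (M / 2 * S) (M / 2 * S - U)
    rw [abs_sub_comm _ U, sub_sub_cancel] at this
    exact this
  have h4 : |M / 2 * S| = |M| / 2 * S := by
    rw [abs_mul, abs_div, abs_two, abs_of_nonneg hS]
  rw [h4] at h3
  have h5 := mul_le_mul_of_nonneg_left h3 (by positivity : (0 : ℝ) ≤ 2 ^ n)
  have h6 := mul_le_mul_of_nonneg_left hl hM.le
  linarith

/-- For `0 < α < 1/2` and a smooth `1`-periodic `θ` with nonzero mean, `2^n |U(2^{−n};θ)| → +∞`;
consequently `U(·;θ)` has no (finite) right derivative at `y = 0`. -/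
theorem weierstrassU_no_rightDeriv (α : ℝ) (h1 : 0 < α) (h2 : α < 1 / 2)
    (θ : ℝ → ℝ) (hθ : ContDiff ℝ (⊤ : ℕ∞) θ) (hper : Function.Periodic θ 1)
    (hmean : (∫ x in (0 : ℝ)..1, θ x) ≠ 0) :
    Tendsto (fun n : ℕ => (2 : ℝ) ^ n * |weierstrassU α θ ((2 : ℝ) ^ (-(n : ℝ)))|) atTop atTop
    ∧ ¬∃ L : ℝ, Tendsto (fun y => weierstrassU α θ y / y) (nhdsWithin 0 (Set.Ioi 0)) (nhds L) := by
  have hf := wU_first α h1 h2 θ hθ hmean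
  refine ⟨hf, ?_⟩
  rintro ⟨L, hL⟩
  have hy : Tendsto (fun n : ℕ => (2 : ℝ) ^ (-(n : ℝ))) atTop (nhdsWithin 0 (Set.Ioi 0)) := by
    refine tendsto_nhdsWithin_iff.mpr ⟨?_, Eventually.of_forall fun n => ?_⟩
    · have : Tendsto (fun n : ℕ => ((2 : ℝ)⁻¹) ^ n) atTop (nhds 0) :=
        tendsto_pow_atTop_nhds_zero_of_lt_one (by norm_num) (by norm_num)
      refine this.congr fun n => ?_
      rw [rpow_neg two_pos.le, rpow_natCast, inv_pow]
    · exact rpow_pos_of_pos two_pos _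
  have hlim := (hL.comp hy).abs
  refine not_tendsto_nhds_of_tendsto_atTop hf |L| (hlim.congr fun n => ?_)
  simp only [Function.comp]
  rw [abs_div, abs_of_pos (rpow_pos_of_pos two_pos (-(n : ℝ))), rpow_neg two_pos.le, rpow_natCast,
    div_inv_eq_mul, mul_comm]
end

section
/- Let α = 1/2 and let θ : ℝ → ℝ be a smooth 1-periodic function with ∫_0^1 θ(x) dx ≠ 0. Then liminf_{n → ∞} 2^n |U(2^{−n};θ)| ≥ |∫_0^1 θ(x) dx|. Consequently, if the right derivative lim_{y → 0+} (1/y) U(y;θ) exists, it is nonzero. -/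
open Real Filter

namespace WeierHelp

noncomputable def c (j : ℕ) : ℝ := π / 2 ^ (j + 1)

noncomputable def a (j : ℕ) : ℝ := √2 ^ (j + 1) * Real.sin (c j)

noncomputable def I (θ : ℝ → ℝ) (n i j : ℕ) : ℝ :=
  ∫ x in (0 : ℝ)..1, Real.cos (2 ^ n * c i * x) * Real.cos (2 ^ n * c j * x) * θ x

lemma c_pos (j : ℕ) : 0 < c j := by unfold c; positivity

lemma c_inj {i j : ℕ} (h : i ≠ j) : c i - c j ≠ 0 := by
  intro h0
  apply h
  have h1 : c i = c j := by linarith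
  unfold c at h1
  have h2 : (2 : ℝ) ^ (i + 1) = 2 ^ (j + 1) := by
    field_simp at h1
    exact h1.symm
  have := pow_right_injective₀ (by norm_num : (0 : ℝ) < 2) (by norm_num) h2
  omega

lemma sqrt2_sq_pow (n : ℕ) : (√2 ^ n) ^ 2 = (2 : ℝ) ^ n := by
  rw [← pow_mul, mul_comm, pow_mul, Real.sq_sqrt (by norm_num)]

lemma a_bound (j : ℕ) : |a j| ≤ π * (1 / √2) ^ (j + 1) := by
  unfold a
  rw [abs_mul, abs_of_nonneg (by positivity : 0 ≤ √2 ^ (j + 1))]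
  have h1 : |Real.sin (c j)| ≤ c j := by
    have := Real.abs_sin_le_abs (x := c j)
    rwa [abs_of_pos (c_pos j)] at this
  calc √2 ^ (j + 1) * |Real.sin (c j)| ≤ √2 ^ (j + 1) * c j := by gcongr
    _ = π * (1 / √2) ^ (j + 1) := by
      unfold c
      rw [← sqrt2_sq_pow (j + 1), one_div, inv_pow]
      have : √2 ^ (j + 1) ≠ 0 := by positivity
      field_simp

lemma a_summable : Summable (fun j => |a j|) := by
  refine Summable.of_nonneg_of_le (fun _ => abs_nonneg _) a_bound ?_
  apply Summable.mul_left
  apply (summable_nat_add_iff 1).2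
  apply summable_geometric_of_lt_one (by positivity)
  rw [div_lt_one (by positivity)]
  exact Real.one_lt_sqrt_two

lemma a_zero_sq : a 0 ^ 2 = 2 := by
  unfold a c
  simp

lemma rl (θ : ℝ → ℝ) (hθ : ContDiff ℝ (⊤ : ℕ∞) θ) :
    Tendsto (fun w : ℝ => ∫ x in (0 : ℝ)..1, Real.cos (w * x) * θ x) atTop (nhds 0) := by
  have hd : Differentiable ℝ θ := hθ.differentiable (by simp)
  have hdc : Continuous (deriv θ) := hθ.continuous_deriv (by exact_mod_cast le_top)
  set K : ℝ := |θ 1| + ∫ x in (0 : ℝ)..1, |deriv θ x| with hK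
  have key : ∀ w : ℝ, 0 < w → ‖∫ x in (0 : ℝ)..1, Real.cos (w * x) * θ x‖ ≤ K / w := by
    intro w hw
    have h1 : ∫ x in (0 : ℝ)..1, θ x * Real.cos (w * x)
        = θ 1 * (Real.sin (w * 1) / w) - θ 0 * (Real.sin (w * 0) / w)
          - ∫ x in (0 : ℝ)..1, deriv θ x * (Real.sin (w * x) / w) := by
      apply intervalIntegral.integral_mul_deriv_eq_deriv_mul (u := θ) (u' := deriv θ)
        (v := fun x => Real.sin (w * x) / w) (v' := fun x => Real.cos (w * x))
      · intro x _
        exact (hd x).hasDerivAt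
      · intro x _
        have h : HasDerivAt (fun x => Real.sin (w * x) / w) (Real.cos (w * x) * (w * 1) / w) x :=
          (((hasDerivAt_id x).const_mul w).sin).div_const w
        rwa [mul_one, mul_div_cancel_right₀ _ hw.ne'] at h
      · exact hdc.intervalIntegrable _ _
      · exact (by fun_prop : Continuous fun x => Real.cos (w * x)).intervalIntegrable _ _
    have h2 : |∫ x in (0 : ℝ)..1, deriv θ x * (Real.sin (w * x) / w)|
        ≤ (∫ x in (0 : ℝ)..1, |deriv θ x|) / w := by
      rw [← intervalIntegral.integral_div]
      refine (intervalIntegral.abs_integral_le_integral_abs zero_le_one).trans ?_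
      apply intervalIntegral.integral_mono_on zero_le_one
      · exact (by fun_prop : Continuous fun x => |deriv θ x * (Real.sin (w * x) / w)|).intervalIntegrable _ _
      · exact (by fun_prop : Continuous fun x => |deriv θ x| / w).intervalIntegrable _ _
      · intro x _
        rw [abs_mul, abs_div, abs_of_pos hw, ← mul_div_assoc]
        gcongr
        exact mul_le_of_le_one_right (abs_nonneg _) (Real.abs_sin_le_one _)
    have h3 : |θ 1 * (Real.sin (w * 1) / w)| ≤ |θ 1| / w := by
      rw [abs_mul, abs_div, abs_of_pos hw, ← mul_div_assoc]
      gcongr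
      exact mul_le_of_le_one_right (abs_nonneg _) (Real.abs_sin_le_one _)
    have h4 : ∫ x in (0 : ℝ)..1, Real.cos (w * x) * θ x
        = ∫ x in (0 : ℝ)..1, θ x * Real.cos (w * x) := by simp only [mul_comm]
    rw [h4, h1, Real.norm_eq_abs, hK, add_div]
    simp only [mul_zero, Real.sin_zero, zero_div, sub_zero]
    exact (abs_sub _ _).trans (add_le_add h3 h2)
  refine squeeze_zero_norm' ((eventually_gt_atTop 0).mono key) ?_
  exact tendsto_const_nhds.div_atTop tendsto_id

lemma rl2 (θ : ℝ → ℝ) (hθ : ContDiff ℝ (⊤ : ℕ∞) θ) (d : ℝ) (hd : d ≠ 0) :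
    Tendsto (fun n : ℕ => ∫ x in (0 : ℝ)..1, Real.cos (2 ^ n * d * x) * θ x) atTop (nhds 0) := by
  have h1 : Tendsto (fun n : ℕ => (2 : ℝ) ^ n * |d|) atTop atTop :=
    (tendsto_pow_atTop_atTop_of_one_lt (by norm_num)).atTop_mul_const (abs_pos.2 hd)
  refine ((rl θ hθ).comp h1).congr fun n => ?_
  simp only [Function.comp]
  congr 1
  ext x
  rcases abs_choice d with h | h <;> rw [h]
  rw [← Real.cos_neg]
  congr 2
  ring

lemma I_eq (θ : ℝ → ℝ) (hθ : Continuous θ) (n i j : ℕ) :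
    I θ n i j = ((∫ x in (0 : ℝ)..1, Real.cos (2 ^ n * (c i - c j) * x) * θ x)
      + ∫ x in (0 : ℝ)..1, Real.cos (2 ^ n * (c i + c j) * x) * θ x) / 2 := by
  unfold I
  rw [← intervalIntegral.integral_add, ← intervalIntegral.integral_div]
  · congr 1
    ext x
    rw [show 2 ^ n * (c i - c j) * x = 2 ^ n * c i * x - 2 ^ n * c j * x by ring,
      show 2 ^ n * (c i + c j) * x = 2 ^ n * c i * x + 2 ^ n * c j * x by ring,
      Real.cos_sub, Real.cos_add]
    ring
  · exact (by fun_prop : Continuous fun x => Real.cos (2 ^ n * (c i - c j) * x) * θ x).intervalIntegrable _ _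
  · exact (by fun_prop : Continuous fun x => Real.cos (2 ^ n * (c i + c j) * x) * θ x).intervalIntegrable _ _

lemma I_tendsto (θ : ℝ → ℝ) (hθ : ContDiff ℝ (⊤ : ℕ∞) θ) (i j : ℕ) :
    Tendsto (fun n => I θ n i j) atTop
      (nhds (if i = j then (∫ x in (0 : ℝ)..1, θ x) / 2 else 0)) := by
  simp only [I_eq θ hθ.continuous]
  have h1 := rl2 θ hθ (c i + c j) (add_pos (c_pos i) (c_pos j)).ne'
  split_ifs with h
  · subst h
    simpa using (h1.const_add (∫ x in (0 : ℝ)..1, θ x)).div_const 2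
  · simpa using ((rl2 θ hθ _ (c_inj h)).add h1).div_const 2

lemma I_bound (θ : ℝ → ℝ) (hθ : Continuous θ) (n i j : ℕ) :
    |I θ n i j| ≤ ∫ x in (0 : ℝ)..1, |θ x| := by
  unfold I
  refine (intervalIntegral.abs_integral_le_integral_abs zero_le_one).trans ?_
  apply intervalIntegral.integral_mono_on zero_le_one
  · exact (by fun_prop : Continuous fun x =>
      |Real.cos (2 ^ n * c i * x) * Real.cos (2 ^ n * c j * x) * θ x|).intervalIntegrable _ _
  · exact hθ.abs.intervalIntegrable _ _
  · intro x _
    rw [abs_mul, abs_mul]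
    refine mul_le_of_le_one_left (abs_nonneg _) ?_
    exact mul_le_one₀ (Real.abs_cos_le_one _) (abs_nonneg _) (Real.abs_cos_le_one _)

lemma rpow_half (k : ℕ) : (2 : ℝ) ^ (-(1 / 2 * (k : ℝ))) = (√2 ^ k)⁻¹ := by
  rw [Real.rpow_neg (by norm_num), Real.rpow_mul (by norm_num), ← Real.sqrt_eq_rpow,
    Real.rpow_natCast]

lemma u2_eq (n : ℕ) (x : ℝ) : weierstrassU2 (1 / 2) x ((2 : ℝ) ^ (-(n : ℝ)))
    = (√2 ^ n)⁻¹ * ∑ j ∈ Finset.range n, a j * Real.cos (2 ^ n * c j * x) := by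
  unfold weierstrassU2
  rw [Real.rpow_neg (by norm_num), Real.rpow_natCast]
  rw [tsum_eq_sum (s := Finset.range n)]
  · rw [← Finset.sum_range_reflect, Finset.mul_sum]
    apply Finset.sum_congr rfl
    intro j hj
    have hj' : j < n := Finset.mem_range.1 hj
    obtain ⟨k, rfl⟩ : ∃ k, n = k + (j + 1) := ⟨n - (j + 1), by omega⟩
    have hk : k + (j + 1) - 1 - j = k := by omega
    rw [hk, rpow_half]
    have e1 : (2 : ℝ) ^ (k + (j + 1)) * c j = 2 ^ k * π := by
      unfold c
      rw [pow_add]; field_simp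
    have e2 : (2 : ℝ) ^ k * π * (2 ^ (k + (j + 1)))⁻¹ = c j := by
      rw [← e1]; field_simp
    rw [e1, e2]
    unfold a
    rw [pow_add √2 k]
    have : √2 ^ (j + 1) ≠ 0 := by positivity
    have : √2 ^ k ≠ 0 := by positivity
    field_simp
  · intro k hk
    obtain ⟨m, rfl⟩ : ∃ m, k = n + m := ⟨k - n, by have := Finset.mem_range.not.1 hk; omega⟩
    have : (2 : ℝ) ^ (n + m) * π * (2 ^ n)⁻¹ = ((2 ^ m : ℕ) : ℝ) * π := by
      rw [pow_add]; push_cast; field_simp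
    rw [this, Real.sin_nat_mul_pi, mul_zero]

lemma U_eq (θ : ℝ → ℝ) (hθ : Continuous θ) (n : ℕ) :
    (2 : ℝ) ^ n * weierstrassU (1 / 2) θ ((2 : ℝ) ^ (-(n : ℝ)))
      = ∑ p ∈ Finset.range n ×ˢ Finset.range n, a p.1 * a p.2 * I θ n p.1 p.2 := by
  unfold weierstrassU I
  rw [← intervalIntegral.integral_const_mul]
  simp only [← intervalIntegral.integral_const_mul]
  rw [← intervalIntegral.integral_finsetSum]
  · congr 1
    ext x
    rw [u2_eq, mul_pow, inv_pow, sqrt2_sq_pow, sq (∑ j ∈ Finset.range n, _),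
      Finset.sum_mul_sum, ← Finset.sum_product', ← mul_assoc, ← mul_assoc,
      mul_inv_cancel₀ (by positivity), one_mul, Finset.sum_mul]
    apply Finset.sum_congr rfl
    intro p _
    ring
  · intro p _
    exact (by fun_prop : Continuous fun x => a p.1 * a p.2 *
      (Real.cos (2 ^ n * c p.1 * x) * Real.cos (2 ^ n * c p.2 * x) * θ x)).intervalIntegrable _ _

noncomputable def S (p : ℕ × ℕ) : ℝ := if p.1 = p.2 then a p.1 * a p.2 / 2 else 0

lemma aa_summable : Summable (fun p : ℕ × ℕ => |a p.1| * |a p.2|) :=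
  a_summable.mul_of_nonneg a_summable (fun _ => abs_nonneg _) (fun _ => abs_nonneg _)

lemma S_nonneg (p : ℕ × ℕ) : 0 ≤ S p := by
  unfold S
  split_ifs with h
  · rw [h]; have := mul_self_nonneg (a p.2); linarith
  · rfl

lemma S_summable : Summable S := by
  refine Summable.of_nonneg_of_le S_nonneg (fun p => ?_) aa_summable
  have h0 : 0 ≤ |a p.1| * |a p.2| := by positivity
  unfold S
  split_ifs with h
  · have := le_abs_self (a p.1 * a p.2)
    rw [abs_mul] at this
    linarith
  · exact h0

lemma one_le_S : 1 ≤ ∑' p, S p := by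
  have h := S_summable.le_tsum (0, 0) (fun p _ => S_nonneg p)
  have : S (0, 0) = 1 := by
    have := a_zero_sq
    simp only [S, if_true]
    linarith [sq (a 0)]
  linarith

lemma U_tendsto (θ : ℝ → ℝ) (hθ : ContDiff ℝ (⊤ : ℕ∞) θ) :
    Tendsto (fun n : ℕ => (2 : ℝ) ^ n * weierstrassU (1 / 2) θ ((2 : ℝ) ^ (-(n : ℝ)))) atTop
      (nhds ((∑' p, S p) * ∫ x in (0 : ℝ)..1, θ x)) := by
  rw [← tsum_mul_right]
  have h := tendsto_tsum_of_dominated_convergence (𝓕 := atTop)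
    (f := fun (n : ℕ) (p : ℕ × ℕ) => if p ∈ Finset.range n ×ˢ Finset.range n then
      a p.1 * a p.2 * I θ n p.1 p.2 else 0)
    (g := fun p => S p * ∫ x in (0 : ℝ)..1, θ x)
    (bound := fun p => |a p.1| * |a p.2| * ∫ x in (0 : ℝ)..1, |θ x|)
    (aa_summable.mul_right _) ?_ ?_
  · refine h.congr fun n => ?_
    rw [U_eq θ hθ.continuous, tsum_eq_sum (s := Finset.range n ×ˢ Finset.range n)]
    · exact Finset.sum_congr rfl fun p hp => if_pos hp
    · intro p hp
      exact if_neg hp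
  · intro p
    have h1 := (I_tendsto θ hθ p.1 p.2).const_mul (a p.1 * a p.2)
    have e : a p.1 * a p.2 * (if p.1 = p.2 then (∫ x in (0 : ℝ)..1, θ x) / 2 else 0)
        = S p * ∫ x in (0 : ℝ)..1, θ x := by
      unfold S
      split_ifs <;> ring
    rw [e] at h1
    refine h1.congr' ?_
    filter_upwards [eventually_gt_atTop p.1, eventually_gt_atTop p.2] with n h2 h3
    rw [if_pos]
    simp [h2, h3]
  · refine Eventually.of_forall fun n p => ?_
    have h0 : 0 ≤ ∫ x in (0 : ℝ)..1, |θ x| := (abs_nonneg _).trans (I_bound θ hθ.continuous 0 0 0)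
    split_ifs
    · rw [Real.norm_eq_abs, abs_mul, abs_mul]
      gcongr
      exact I_bound θ hθ.continuous n _ _
    · rw [norm_zero]
      positivity

end WeierHelp

/-- For `α = 1/2` and a smooth `1`-periodic `θ` with nonzero mean,
`liminf_{n→∞} 2^n |U(2^{−n};θ)| ≥ |∫_0^1 θ|`; consequently, if the right derivative
`lim_{y→0+} U(y;θ)/y` exists, it is nonzero. -/
theorem weierstrassU_half_liminf (θ : ℝ → ℝ) (hθ : ContDiff ℝ (⊤ : ℕ∞) θ)
    (hper : Function.Periodic θ 1) (hmean : (∫ x in (0 : ℝ)..1, θ x) ≠ 0) :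
    |∫ x in (0 : ℝ)..1, θ x| ≤
        Filter.liminf
          (fun n : ℕ => (2 : ℝ) ^ n * |weierstrassU (1 / 2) θ ((2 : ℝ) ^ (-(n : ℝ)))|) atTop
    ∧ ∀ L : ℝ,
        Tendsto (fun y => weierstrassU (1 / 2) θ y / y) (nhdsWithin 0 (Set.Ioi 0)) (nhds L) →
          L ≠ 0 := by
  have h := WeierHelp.U_tendsto θ hθ
  have hS := WeierHelp.one_le_S
  constructor
  · have h2 := h.abs
    have h3 : Tendsto (fun n : ℕ => (2 : ℝ) ^ n * |weierstrassU (1 / 2) θ ((2 : ℝ) ^ (-(n : ℝ)))|)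
        atTop (nhds |(∑' p, WeierHelp.S p) * ∫ x in (0 : ℝ)..1, θ x|) := by
      refine h2.congr fun n => ?_
      rw [abs_mul, abs_of_pos (by positivity : (0 : ℝ) < 2 ^ n)]
    rw [h3.liminf_eq, abs_mul]
    exact le_mul_of_one_le_left (abs_nonneg _) (hS.trans (le_abs_self _))
  · intro L hL
    have h4 : Tendsto (fun n : ℕ => (2 : ℝ) ^ (-(n : ℝ))) atTop (nhdsWithin 0 (Set.Ioi 0)) := by
      apply tendsto_nhdsWithin_of_tendsto_nhds_of_eventually_within
      · have := tendsto_inv_atTop_zero.comp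
          (tendsto_pow_atTop_atTop_of_one_lt (by norm_num : (1 : ℝ) < 2))
        refine this.congr fun n => ?_
        rw [Real.rpow_neg (by norm_num), Real.rpow_natCast]
        rfl
      · exact Eventually.of_forall fun n => Set.mem_Ioi.2 (by positivity)
    have h5 : L = (∑' p, WeierHelp.S p) * ∫ x in (0 : ℝ)..1, θ x := by
      refine tendsto_nhds_unique ((hL.comp h4).congr fun n => ?_) h
      simp only [Function.comp]
      rw [div_eq_mul_inv, mul_comm]
      congr 1
      rw [Real.rpow_neg (by norm_num), Real.rpow_natCast, inv_inv]
    rw [h5]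
    exact mul_ne_zero (by linarith) hmean
end

section
/- Let 1/2 < α ≤ 1 and let θ : ℝ → ℝ be a smooth 1-periodic function. Then lim_{y → 0+} (1/y) U(y;θ) = 0; that is, for any Hölder exponent strictly greater than 1/2 the right derivative of y ↦ ∫_0^1 u₂(x,y)² θ(x) dx at y = 0 exists and vanishes. -/
open Real Filter

theorem abs_sin_le_rpow (s t : ℝ) (hs : 0 < s) (hs1 : s ≤ 1) (ht : 0 < t) :
    |Real.sin t| ≤ t ^ s := by
  rcases le_total t 1 with h | h
  · have h3 : |Real.sin t| ≤ |t| := Real.abs_sin_le_abs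
    rw [abs_of_pos ht] at h3
    calc |Real.sin t| ≤ t ^ (1:ℝ) := by rwa [Real.rpow_one]
      _ ≤ t ^ s := Real.rpow_le_rpow_of_exponent_ge ht h hs1
  · exact (Real.abs_sin_le_one t).trans (Real.one_le_rpow h hs.le)

theorem weierstrassU2_bound (α s x y : ℝ) (hs : 0 < s) (hs1 : s ≤ 1) (hsα : s < α) (hy : 0 < y) :
    |weierstrassU2 α x y| ≤ (π ^ s * (1 - (2:ℝ) ^ (s - α))⁻¹) * y ^ s := by
  have hr0 : 0 ≤ (2:ℝ) ^ (s - α) := by positivity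
  have hr1 : (2:ℝ) ^ (s - α) < 1 := Real.rpow_lt_one_of_one_lt_of_neg (by norm_num) (by linarith)
  have hg := (hasSum_geometric_of_lt_one hr0 hr1).mul_left ((π * y) ^ s)
  have hb := tsum_of_norm_bounded hg (f := fun k : ℕ =>
    (2 : ℝ) ^ (-(α * (k : ℝ))) * Real.cos (2 ^ k * π * x) * Real.sin (2 ^ k * π * y)) ?_
  · rw [Real.norm_eq_abs] at hb
    refine hb.trans (le_of_eq ?_)
    rw [Real.mul_rpow pi_pos.le hy.le]
    ring
  · intro k
    have hpk : 0 < (2:ℝ) ^ k * π * y := by positivity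
    have e : (2 : ℝ) ^ (-(α * (k : ℝ))) * ((2:ℝ) ^ k * π * y) ^ s
        = (π * y) ^ s * ((2:ℝ) ^ (s - α)) ^ k := by
      rw [mul_assoc ((2:ℝ)^k), Real.mul_rpow (by positivity) (by positivity),
        ← Real.rpow_natCast 2 k, ← Real.rpow_mul (by norm_num), ← Real.rpow_natCast _ k,
        ← Real.rpow_mul (by norm_num), ← mul_assoc, ← Real.rpow_add (by norm_num), mul_comm]
      congr 2
      ring
    rw [← e, norm_mul, norm_mul, Real.norm_eq_abs, Real.norm_eq_abs, Real.norm_eq_abs,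
      abs_of_pos (by positivity : (0:ℝ) < (2 : ℝ) ^ (-(α * (k : ℝ))))]
    refine mul_le_mul ?_ (abs_sin_le_rpow s _ hs hs1 hpk) (abs_nonneg _) (by positivity)
    exact mul_le_of_le_one_right (by positivity) (Real.abs_cos_le_one _)

/-- For `1/2 < α ≤ 1` and any smooth `1`-periodic `θ`, the right derivative of `U(·;θ)` at
`y = 0` exists and vanishes: `lim_{y→0+} U(y;θ)/y = 0`. -/
theorem weierstrassU_highHolder_rightDeriv (α : ℝ) (h1 : 1 / 2 < α) (h2 : α ≤ 1)
    (θ : ℝ → ℝ) (hθ : ContDiff ℝ (⊤ : ℕ∞) θ) (hper : Function.Periodic θ 1) :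
    Tendsto (fun y => weierstrassU α θ y / y) (nhdsWithin 0 (Set.Ioi 0)) (nhds 0) := by
  obtain ⟨s, hs, hsα⟩ := exists_between h1
  obtain ⟨M, hM⟩ := (isCompact_Icc (a := (0:ℝ)) (b := 1)).exists_bound_of_continuousOn
    hθ.continuous.continuousOn
  set C := π ^ s * (1 - (2:ℝ) ^ (s - α))⁻¹ with hC
  have hlim : Tendsto (fun y : ℝ => C ^ 2 * M * y ^ (2 * s - 1))
      (nhdsWithin 0 (Set.Ioi 0)) (nhds 0) := by
    have h : Tendsto (fun y : ℝ => y ^ (2 * s - 1)) (nhds 0) (nhds 0) := by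
      have := (Real.continuousAt_rpow_const 0 (2 * s - 1) (Or.inr (by linarith))).tendsto
      rwa [Real.zero_rpow (by linarith)] at this
    simpa using (h.mono_left nhdsWithin_le_nhds).const_mul (C ^ 2 * M)
  refine squeeze_zero_norm' ?_ hlim
  filter_upwards [self_mem_nhdsWithin] with y hy
  have hy : 0 < y := hy
  have hU : ‖weierstrassU α θ y‖ ≤ ((C * y ^ s) ^ 2 * M) * |1 - 0| := by
    refine intervalIntegral.norm_integral_le_of_norm_le_const ?_
    intro x hx
    rw [Set.uIoc_of_le zero_le_one] at hx
    rw [norm_mul, norm_pow]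
    have hb := weierstrassU2_bound α s x y (by linarith) (by linarith) hsα hy
    exact mul_le_mul (pow_le_pow_left₀ (norm_nonneg _) hb 2) (hM x ⟨hx.1.le, hx.2⟩)
      (norm_nonneg _) (by positivity)
  rw [norm_div, Real.norm_eq_abs y, abs_of_pos hy, div_le_iff₀ hy]
  refine hU.trans (le_of_eq ?_)
  have e : (y ^ s) ^ 2 = y ^ (2 * s - 1) * y := by
    rw [← Real.rpow_natCast, ← Real.rpow_mul hy.le]
    nth_rewrite 3 [← Real.rpow_one y]
    rw [← Real.rpow_add hy]
    congr 1
    push_cast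
    ring
  rw [mul_pow, e]
  simp
  ring
end

section
/- Let 0 < α < 1/2 and let y₁ = j/2^m be a dyadic rational with integers m ≥ 1 and 1 ≤ j ≤ 2^m − 1. Then for the function S(y) = ∑_{k=0}^∞ 2^{−2αk} sin²(2^k π y) one has 2^n ( S(y₁ + 2^{−n}) − S(y₁) ) → +∞ as n → ∞. -/
open Real Filter

/-- `S(y) = ∑_{k=0}^∞ 2^{−2αk} sin²(2^k π y)`. -/
noncomputable def resonantS (α y : ℝ) : ℝ :=
  ∑' k : ℕ, (2 : ℝ) ^ (-(2 * α * (k : ℝ))) * Real.sin (2 ^ k * π * y) ^ 2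

lemma rS_summable (α : ℝ) (h1 : 0 < α) (y : ℝ) :
    Summable (fun k : ℕ => (2 : ℝ) ^ (-(2 * α * (k : ℝ))) * Real.sin (2 ^ k * π * y) ^ 2) := by
  have hg : Summable (fun k : ℕ => ((2 : ℝ) ^ (-(2 * α))) ^ k) := by
    apply summable_geometric_of_lt_one (by positivity)
    apply Real.rpow_lt_one_of_one_lt_of_neg <;> linarith
  refine Summable.of_nonneg_of_le (fun k => by positivity) (fun k => ?_) hg
  have : (2 : ℝ) ^ (-(2 * α * (k : ℝ))) = ((2 : ℝ) ^ (-(2 * α))) ^ k := by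
    rw [← Real.rpow_natCast, ← Real.rpow_mul (by norm_num)]
    congr 1; ring
  rw [this]
  exact mul_le_of_le_one_right (by positivity) (Real.sin_sq_le_one _)

lemma rS_sin_sq (a b : ℝ) : -|a - b| ≤ Real.sin a ^ 2 - Real.sin b ^ 2 := by
  have h : Real.sin a ^ 2 - Real.sin b ^ 2 = Real.sin (a + b) * Real.sin (a - b) := by
    rw [Real.sin_add, Real.sin_sub]
    have := Real.sin_sq_add_cos_sq a
    have := Real.sin_sq_add_cos_sq b
    have e1 : Real.cos a ^ 2 = 1 - Real.sin a ^ 2 := by linarith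
    have e2 : Real.cos b ^ 2 = 1 - Real.sin b ^ 2 := by linarith
    ring_nf
    rw [e1, e2]; ring
  rw [h]
  have h3 : |Real.sin (a + b) * Real.sin (a - b)| ≤ |a - b| := by
    rw [abs_mul]
    calc _ ≤ 1 * |a - b| := by
          exact mul_le_mul (Real.abs_sin_le_one _) Real.abs_sin_le_abs (abs_nonneg _) zero_le_one
      _ = _ := one_mul _
  exact (abs_le.mp h3).1

lemma rS_sin_zero (m j k : ℕ) (hk : m ≤ k) :
    Real.sin (2 ^ k * π * ((j : ℝ) / 2 ^ m)) = 0 := by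
  obtain ⟨p, rfl⟩ := Nat.exists_eq_add_of_le hk
  have : (2 : ℝ) ^ (m + p) * π * ((j : ℝ) / 2 ^ m) = ((2 ^ p * j : ℕ) : ℝ) * π := by
    push_cast; rw [pow_add]; field_simp
  rw [this, Real.sin_nat_mul_pi]

lemma rS_sin_one (m j p : ℕ) :
    Real.sin (2 ^ (m + p) * π * ((j : ℝ) / 2 ^ m + (2 : ℝ) ^ (-((p + (m + 1) : ℕ) : ℝ)))) ^ 2
      = 1 := by
  have : (2 : ℝ) ^ (m + p) * π * ((j : ℝ) / 2 ^ m + (2 : ℝ) ^ (-((p + (m + 1) : ℕ) : ℝ)))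
      = π / 2 + ((2 ^ p * j : ℕ) : ℝ) * π := by
    rw [Real.rpow_neg (by norm_num), Real.rpow_natCast]
    push_cast
    simp only [pow_add]
    field_simp
    ring
  rw [this, Real.sin_add_nat_mul_pi, Real.sin_pi_div_two, mul_one, ← pow_mul, mul_comm, pow_mul]
  norm_num

lemma rS_lower (α : ℝ) (h1 : 0 < α) (m j p : ℕ) :
    (2 : ℝ) ^ (-(2 * α * ((m + p : ℕ) : ℝ)))
        - (∑ k ∈ Finset.range m, 2 ^ k * π) * (2 : ℝ) ^ (-((p + (m + 1) : ℕ) : ℝ))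
      ≤ resonantS α ((j : ℝ) / 2 ^ m + (2 : ℝ) ^ (-((p + (m + 1) : ℕ) : ℝ)))
        - resonantS α ((j : ℝ) / 2 ^ m) := by
  have hone := rS_sin_one m j p
  set e : ℝ := (2 : ℝ) ^ (-((p + (m + 1) : ℕ) : ℝ)) with he
  have he0 : 0 < e := by positivity
  set y : ℝ := (j : ℝ) / 2 ^ m with hy
  have s1 := rS_summable α h1 (y + e)
  have s2 := rS_summable α h1 y
  unfold resonantS
  rw [← s1.tsum_sub s2]
  have hz : ∀ k, m ≤ k → Real.sin (2 ^ k * π * y) = 0 := fun k hk => rS_sin_zero m j k hk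
  refine le_trans ?_ ((s1.sub s2).sum_le_tsum (insert (m + p) (Finset.range m)) ?_)
  · rw [Finset.sum_insert (by simp), hone, hz _ (by omega), Finset.sum_mul, sub_eq_add_neg,
      ← Finset.sum_neg_distrib]
    refine add_le_add (by simp) (Finset.sum_le_sum fun k _ => ?_)
    rw [← mul_sub]
    have hb := rS_sin_sq (2 ^ k * π * (y + e)) (2 ^ k * π * y)
    have ha : |2 ^ k * π * (y + e) - 2 ^ k * π * y| = 2 ^ k * π * e := by
      rw [← mul_sub, add_sub_cancel_left]; exact abs_of_pos (by positivity)
    rw [ha] at hb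
    have hc : (2 : ℝ) ^ (-(2 * α * (k : ℝ))) ≤ 1 := by
      apply Real.rpow_le_one_of_one_le_of_nonpos (by norm_num)
      have : 0 ≤ 2 * α * (k : ℝ) := by positivity
      linarith
    have hc0 : 0 < (2 : ℝ) ^ (-(2 * α * (k : ℝ))) := by positivity
    have hp : 0 < 2 ^ k * π * e := by positivity
    nlinarith
  · intro k hk
    simp only [Finset.mem_insert, Finset.mem_range, not_or, not_lt] at hk
    rw [hz k hk.2]
    simp only [ne_eq, OfNat.ofNat_ne_zero, not_false_eq_true, zero_pow, mul_zero, sub_zero]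
    positivity

/-- For `0 < α < 1/2` and a dyadic rational `y₁ = j/2^m` (with `m ≥ 1`, `1 ≤ j ≤ 2^m − 1`),
one has `2^n (S(y₁ + 2^{−n}) − S(y₁)) → +∞` as `n → ∞`. -/
theorem resonantS_dyadic_blowup (α : ℝ) (h1 : 0 < α) (h2 : α < 1 / 2)
    (m j : ℕ) (hm : 1 ≤ m) (hj1 : 1 ≤ j) (hj2 : j ≤ 2 ^ m - 1) :
    Tendsto
      (fun n : ℕ => (2 : ℝ) ^ n *
        (resonantS α ((j : ℝ) / 2 ^ m + (2 : ℝ) ^ (-(n : ℝ))) - resonantS α ((j : ℝ) / 2 ^ m)))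
      atTop atTop := by
  rw [← tendsto_add_atTop_iff_nat (m + 1)]
  have hg : Tendsto (fun p : ℕ => ((2 : ℝ) ^ (1 - 2 * α)) ^ p - ∑ k ∈ Finset.range m, 2 ^ k * π)
      atTop atTop := by
    apply tendsto_atTop_add_const_right
    apply tendsto_pow_atTop_atTop_of_one_lt
    apply Real.one_lt_rpow <;> linarith
  refine tendsto_atTop_mono (fun p => ?_) hg
  have hl := mul_le_mul_of_nonneg_left (rS_lower α h1 m j p)
    (show (0 : ℝ) ≤ 2 ^ (p + (m + 1)) by positivity)
  refine le_trans ?_ hl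
  rw [mul_sub]
  have e1 : (2 : ℝ) ^ (p + (m + 1)) * ((∑ k ∈ Finset.range m, 2 ^ k * π)
      * (2 : ℝ) ^ (-((p + (m + 1) : ℕ) : ℝ))) = ∑ k ∈ Finset.range m, 2 ^ k * π := by
    rw [Real.rpow_neg (by norm_num), Real.rpow_natCast]
    rw [mul_left_comm, mul_inv_cancel₀ (by positivity), mul_one]
  rw [e1]
  apply sub_le_sub_right
  rw [← Real.rpow_natCast, ← Real.rpow_natCast, ← Real.rpow_mul (by norm_num),
    ← Real.rpow_add (by norm_num)]
  apply Real.rpow_le_rpow_of_exponent_le (by norm_num)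
  push_cast
  have : (0 : ℝ) ≤ m := by positivity
  nlinarith
end

section
/- Let 0 < α < 1/2 and let θ : ℝ → ℝ be a smooth 1-periodic function with ∫_0^1 θ(x) dx ≠ 0. Then for every dyadic rational y₁ = j/2^m in (0,1) (with integers m ≥ 1 and 1 ≤ j ≤ 2^m − 1), one has limsup_{n → ∞} 2^n | U(y₁ + 2^{−n};θ) − U(y₁;θ) | = +∞; consequently the function y ↦ U(y;θ) is not differentiable at y₁, so it fails to be differentiable at a dense set of points of [0,1]. -/
open Real Filter

lemma wf_ibp (θ : ℝ → ℝ) (hθ : ContDiff ℝ (⊤ : ℕ∞) θ) :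
    ∃ B : ℝ, 0 ≤ B ∧ ∀ w : ℝ, |∫ x in (0:ℝ)..1, Real.cos (w * x) * θ x| * |w| ≤ B := by
  have hd : ∀ x, HasDerivAt θ (deriv θ x) x := fun x =>
    ((hθ.differentiable (by simp)) x).hasDerivAt
  have hc : Continuous (deriv θ) := hθ.continuous_deriv (by simp)
  have hc0 : Continuous θ := hθ.continuous
  refine ⟨|θ 1| + ∫ x in (0:ℝ)..1, |deriv θ x|, ?_, ?_⟩
  · have := intervalIntegral.integral_nonneg (μ := MeasureTheory.volume) (a := (0:ℝ)) (b := 1)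
      (f := fun x => |deriv θ x|) (by norm_num) (fun x _ => abs_nonneg _)
    positivity
  · intro w
    have h := intervalIntegral.integral_mul_deriv_eq_deriv_mul (a := 0) (b := 1)
      (u := θ) (v := fun x => Real.sin (w * x)) (u' := deriv θ)
      (v' := fun x => Real.cos (w * x) * w) (fun x _ => hd x)
      (fun x _ => by
        have := ((hasDerivAt_id x).const_mul w).sin
        simpa using this)
      (hc.intervalIntegrable _ _) (Continuous.intervalIntegrable (by fun_prop) _ _)
    have e : (∫ x in (0:ℝ)..1, θ x * (Real.cos (w * x) * w))
        = (∫ x in (0:ℝ)..1, Real.cos (w * x) * θ x) * w := by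
      rw [← intervalIntegral.integral_mul_const]
      congr 1; ext x; ring
    rw [e] at h
    rw [← abs_mul, h]
    have h3 : |∫ x in (0:ℝ)..1, deriv θ x * Real.sin (w * x)| ≤ ∫ x in (0:ℝ)..1, |deriv θ x| := by
      refine (intervalIntegral.abs_integral_le_integral_abs (by norm_num)).trans ?_
      refine intervalIntegral.integral_mono_on (by norm_num)
        (Continuous.intervalIntegrable (by fun_prop) _ _)
        (Continuous.intervalIntegrable (by fun_prop) _ _) ?_
      intro x _
      rw [abs_mul]
      exact mul_le_of_le_one_right (abs_nonneg _) (Real.abs_sin_le_one _)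
    refine (abs_sub _ _).trans (add_le_add ?_ h3)
    simp only [mul_zero, Real.sin_zero, sub_zero, abs_mul]
    exact mul_le_of_le_one_right (abs_nonneg _) (Real.abs_sin_le_one _)

lemma wf_coef (θ : ℝ → ℝ) (hθ : ContDiff ℝ (⊤ : ℕ∞) θ) :
    ∃ B : ℝ, 0 ≤ B ∧ ∀ k l : ℕ,
      |(∫ x in (0:ℝ)..1, Real.cos (2 ^ k * π * x) * Real.cos (2 ^ l * π * x) * θ x)
        - (if k = l then (∫ x in (0:ℝ)..1, θ x) / 2 else 0)| * ((2:ℝ) ^ k + 2 ^ l) ≤ B := by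
  obtain ⟨B, hB, H⟩ := wf_ibp θ hθ
  have hc0 : Continuous θ := hθ.continuous
  refine ⟨2 * B, by positivity, fun k l => ?_⟩
  have key : (∫ x in (0:ℝ)..1, Real.cos (2 ^ k * π * x) * Real.cos (2 ^ l * π * x) * θ x)
      = ((∫ x in (0:ℝ)..1, Real.cos (((2 ^ k - 2 ^ l) * π) * x) * θ x)
        + ∫ x in (0:ℝ)..1, Real.cos (((2 ^ k + 2 ^ l) * π) * x) * θ x) / 2 := by
    rw [← intervalIntegral.integral_add (Continuous.intervalIntegrable (by fun_prop) _ _)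
      (Continuous.intervalIntegrable (by fun_prop) _ _), ← intervalIntegral.integral_div]
    congr 1; ext x
    have e1 : ((2:ℝ) ^ k - 2 ^ l) * π * x = 2 ^ k * π * x - 2 ^ l * π * x := by ring
    have e2 : ((2:ℝ) ^ k + 2 ^ l) * π * x = 2 ^ k * π * x + 2 ^ l * π * x := by ring
    rw [e1, e2, Real.cos_sub, Real.cos_add]; ring
  have hp : (0:ℝ) < 2 ^ k + 2 ^ l := by positivity
  have h2 := H ((2 ^ k + 2 ^ l) * π)
  rw [abs_mul, abs_of_pos hp, abs_of_pos Real.pi_pos] at h2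
  have h1 := H ((2 ^ k - 2 ^ l) * π)
  rw [abs_mul, abs_of_pos Real.pi_pos] at h1
  rw [key]
  set I1 := ∫ x in (0:ℝ)..1, Real.cos (((2 ^ k - 2 ^ l) * π) * x) * θ x with hI1
  set I2 := ∫ x in (0:ℝ)..1, Real.cos (((2 ^ k + 2 ^ l) * π) * x) * θ x with hI2
  have hpi := Real.pi_gt_three
  have hI2n := abs_nonneg I2
  have hI1n := abs_nonneg I1
  have h2' : |I2| * (2 ^ k + 2 ^ l) * 3 ≤ B := by
    refine le_trans ?_ h2
    rw [← mul_assoc]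
    gcongr
  split_ifs with hkl
  · subst hkl
    have : I1 = ∫ x in (0:ℝ)..1, θ x := by simp [hI1]
    rw [← this]
    have e : (I1 + I2) / 2 - I1 / 2 = I2 / 2 := by ring
    rw [e, abs_div, abs_two]
    nlinarith
  · have h3 : (2:ℝ) ^ k + 2 ^ l ≤ 3 * |2 ^ k - 2 ^ l| := by
      rcases lt_or_gt_of_ne hkl with h | h
      · have : (2:ℝ) ^ (k+1) ≤ 2 ^ l := pow_le_pow_right₀ (by norm_num) h
        rw [pow_succ] at this
        have h5 := neg_le_abs ((2:ℝ) ^ k - 2 ^ l)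
        linarith
      · have : (2:ℝ) ^ (l+1) ≤ 2 ^ k := pow_le_pow_right₀ (by norm_num) h
        rw [pow_succ] at this
        have h5 := le_abs_self ((2:ℝ) ^ k - 2 ^ l)
        linarith
    have h1' : |I1| * (2 ^ k + 2 ^ l) ≤ B := by
      refine le_trans ?_ h1
      have : (2:ℝ) ^ k + 2 ^ l ≤ |2 ^ k - 2 ^ l| * π := by
        nlinarith [abs_nonneg ((2:ℝ) ^ k - 2 ^ l)]
      gcongr
    rw [sub_zero, abs_div, abs_two]
    have := abs_add_le I1 I2
    nlinarith

lemma wf_lip (k l : ℕ) (y z : ℝ) :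
    |Real.sin (2 ^ k * π * y) * Real.sin (2 ^ l * π * y)
      - Real.sin (2 ^ k * π * z) * Real.sin (2 ^ l * π * z)| ≤ ((2:ℝ) ^ k + 2 ^ l) * (π * |y - z|) := by
  have hs : ∀ k : ℕ, |Real.sin (2 ^ k * π * y) - Real.sin (2 ^ k * π * z)| ≤ 2 ^ k * (π * |y - z|) := by
    intro k
    have := Real.lipschitzWith_sin.dist_le_mul (2 ^ k * π * y) (2 ^ k * π * z)
    rw [Real.dist_eq, Real.dist_eq, ← mul_sub, abs_mul, abs_of_pos (by positivity : (0:ℝ) < 2 ^ k * π)] at this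
    simp at this
    linarith
  have e : Real.sin (2 ^ k * π * y) * Real.sin (2 ^ l * π * y)
      - Real.sin (2 ^ k * π * z) * Real.sin (2 ^ l * π * z)
      = (Real.sin (2 ^ k * π * y) - Real.sin (2 ^ k * π * z)) * Real.sin (2 ^ l * π * y)
      + Real.sin (2 ^ k * π * z) * (Real.sin (2 ^ l * π * y) - Real.sin (2 ^ l * π * z)) := by ring
  rw [e, add_mul]
  refine (abs_add_le _ _).trans (add_le_add ?_ ?_)
  · rw [abs_mul]
    exact (mul_le_of_le_one_right (abs_nonneg _) (Real.abs_sin_le_one _)).trans (hs k)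
  · rw [abs_mul]
    exact (mul_le_of_le_one_left (abs_nonneg _) (Real.abs_sin_le_one _)).trans (hs l)

lemma wf_expand (α : ℝ) (θ : ℝ → ℝ) (hc : Continuous θ) (n : ℕ) (y : ℝ)
    (hy : ∀ k, n ≤ k → Real.sin (2 ^ k * π * y) = 0) :
    weierstrassU α θ y = ∑ k ∈ Finset.range n, ∑ l ∈ Finset.range n,
      ((2 : ℝ) ^ (-(α * (k : ℝ))) * (2 : ℝ) ^ (-(α * (l : ℝ)))) *
      (Real.sin (2 ^ k * π * y) * Real.sin (2 ^ l * π * y)) *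
      ∫ x in (0:ℝ)..1, Real.cos (2 ^ k * π * x) * Real.cos (2 ^ l * π * x) * θ x := by
  have h : ∀ x, weierstrassU2 α x y = ∑ k ∈ Finset.range n,
      (2 : ℝ) ^ (-(α * (k : ℝ))) * Real.cos (2 ^ k * π * x) * Real.sin (2 ^ k * π * y) := by
    intro x
    refine tsum_eq_sum fun k hk => ?_
    rw [hy k (by simpa using hk), mul_zero]
  unfold weierstrassU
  simp_rw [h, sq, Finset.sum_mul_sum, Finset.sum_mul]
  rw [intervalIntegral.integral_finsetSum]
  · refine Finset.sum_congr rfl fun k _ => ?_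
    rw [intervalIntegral.integral_finsetSum]
    · refine Finset.sum_congr rfl fun l _ => ?_
      rw [← intervalIntegral.integral_const_mul]
      congr 1; ext x; ring
    · intro l _
      exact Continuous.intervalIntegrable (by fun_prop) _ _
  · intro k _
    exact Continuous.intervalIntegrable (by fun_prop) _ _

lemma wf_sum_bound (α : ℝ) (h1 : 0 < α) :
    ∃ S : ℝ, 0 ≤ S ∧ ∀ n : ℕ, ∑ k ∈ Finset.range n, (2 : ℝ) ^ (-(α * (k : ℝ))) ≤ S := by
  have hs : Summable fun k : ℕ => (2 : ℝ) ^ (-(α * (k : ℝ))) := by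
    have : (fun k : ℕ => (2 : ℝ) ^ (-(α * (k : ℝ)))) = fun k : ℕ => ((2:ℝ) ^ (-α)) ^ k := by
      ext k
      rw [← Real.rpow_natCast, ← Real.rpow_mul (by norm_num)]
      congr 1; ring
    rw [this]
    exact summable_geometric_of_lt_one (by positivity)
      (Real.rpow_lt_one_of_one_lt_of_neg (by norm_num) (by linarith))
  exact ⟨_, tsum_nonneg fun k => by positivity,
    fun n => hs.sum_le_tsum _ fun k _ => by positivity⟩

lemma wf_split (α : ℝ) (h1 : 0 < α) (θ : ℝ → ℝ) (hθ : ContDiff ℝ (⊤ : ℕ∞) θ) :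
    ∃ K : ℝ, ∀ (n : ℕ) (y z : ℝ), (∀ k, n ≤ k → Real.sin (2 ^ k * π * y) = 0) →
      (∀ k, n ≤ k → Real.sin (2 ^ k * π * z) = 0) →
      |weierstrassU α θ y - weierstrassU α θ z - (∫ x in (0:ℝ)..1, θ x) / 2 *
        ∑ k ∈ Finset.range n, ((2 : ℝ) ^ (-(α * (k : ℝ)))) ^ 2 *
          (Real.sin (2 ^ k * π * y) ^ 2 - Real.sin (2 ^ k * π * z) ^ 2)| ≤ K * |y - z| := by
  obtain ⟨B, hB, H⟩ := wf_coef θ hθ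
  obtain ⟨S, hS, HS⟩ := wf_sum_bound α h1
  refine ⟨S * S * B * π, fun n y z hy hz => ?_⟩
  rw [wf_expand α θ hθ.continuous n y hy, wf_expand α θ hθ.continuous n z hz]
  have e : (∫ x in (0:ℝ)..1, θ x) / 2 *
        ∑ k ∈ Finset.range n, ((2 : ℝ) ^ (-(α * (k : ℝ)))) ^ 2 *
          (Real.sin (2 ^ k * π * y) ^ 2 - Real.sin (2 ^ k * π * z) ^ 2)
      = ∑ k ∈ Finset.range n, ∑ l ∈ Finset.range n,
        ((2 : ℝ) ^ (-(α * (k : ℝ))) * (2 : ℝ) ^ (-(α * (l : ℝ)))) *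
        (Real.sin (2 ^ k * π * y) * Real.sin (2 ^ l * π * y)
          - Real.sin (2 ^ k * π * z) * Real.sin (2 ^ l * π * z)) *
        (if k = l then (∫ x in (0:ℝ)..1, θ x) / 2 else 0) := by
    rw [Finset.mul_sum]
    refine Finset.sum_congr rfl fun k hk => ?_
    simp only [mul_ite, mul_zero]
    rw [Finset.sum_ite_eq, if_pos hk]
    ring
  rw [e]
  simp only [← Finset.sum_sub_distrib]
  calc _ ≤ ∑ k ∈ Finset.range n, ∑ l ∈ Finset.range n,
        ((2 : ℝ) ^ (-(α * (k : ℝ))) * (2 : ℝ) ^ (-(α * (l : ℝ)))) * (B * π * |y - z|) := by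
        refine (Finset.abs_sum_le_sum_abs _ _).trans (Finset.sum_le_sum fun k _ => ?_)
        refine (Finset.abs_sum_le_sum_abs _ _).trans (Finset.sum_le_sum fun l _ => ?_)
        have hH := H k l
        have hL := wf_lip k l y z
        set c := ∫ x in (0:ℝ)..1, Real.cos (2 ^ k * π * x) * Real.cos (2 ^ l * π * x) * θ x
        set d := if k = l then (∫ x in (0:ℝ)..1, θ x) / 2 else 0
        set p := (2 : ℝ) ^ (-(α * (k : ℝ))) * (2 : ℝ) ^ (-(α * (l : ℝ))) with hp
        have hp0 : 0 ≤ p := by positivity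
        set t := Real.sin (2 ^ k * π * y) * Real.sin (2 ^ l * π * y)
        set t' := Real.sin (2 ^ k * π * z) * Real.sin (2 ^ l * π * z)
        have e2 : p * t * c - p * t' * c - p * (t - t') * d = p * ((c - d) * (t - t')) := by ring
        rw [e2, abs_mul, abs_of_nonneg hp0, abs_mul]
        refine mul_le_mul_of_nonneg_left ?_ hp0
        calc |c - d| * |t - t'| ≤ |c - d| * (((2:ℝ) ^ k + 2 ^ l) * (π * |y - z|)) := by gcongr
          _ = (|c - d| * ((2:ℝ) ^ k + 2 ^ l)) * (π * |y - z|) := by ring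
          _ ≤ B * (π * |y - z|) := by gcongr
          _ = _ := by ring
    _ = (∑ k ∈ Finset.range n, (2 : ℝ) ^ (-(α * (k : ℝ)))) *
        (∑ k ∈ Finset.range n, (2 : ℝ) ^ (-(α * (k : ℝ)))) * (B * π * |y - z|) := by
        rw [Finset.sum_mul_sum, Finset.sum_mul]
        simp_rw [Finset.sum_mul]
    _ ≤ S * S * (B * π * |y - z|) := by
        have := HS n
        have h0 : 0 ≤ ∑ k ∈ Finset.range n, (2 : ℝ) ^ (-(α * (k : ℝ))) :=
          Finset.sum_nonneg fun k _ => by positivity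
        gcongr
    _ = _ := by ring

lemma wf_sin_zero (m j k : ℕ) (hk : m ≤ k) : Real.sin (2 ^ k * π * ((j:ℝ) / 2 ^ m)) = 0 := by
  obtain ⟨d, rfl⟩ := Nat.exists_eq_add_of_le hk
  have : (2:ℝ) ^ (m + d) * π * ((j:ℝ) / 2 ^ m) = ((2 ^ d * j : ℕ) : ℝ) * π := by
    push_cast; rw [pow_add]; field_simp
  rw [this, Real.sin_nat_mul_pi]

lemma wf_diag (α : ℝ) (h1 : 0 < α) (m j : ℕ) :
    ∃ C : ℝ, ∀ n : ℕ, m < n →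
      ((2 : ℝ) ^ (-(α * (n : ℝ)))) ^ 2 - C * (2:ℝ) ^ (-(n:ℝ)) ≤
      ∑ k ∈ Finset.range n, ((2 : ℝ) ^ (-(α * (k : ℝ)))) ^ 2 *
          (Real.sin (2 ^ k * π * ((j:ℝ) / 2 ^ m + (2:ℝ) ^ (-(n:ℝ)))) ^ 2
            - Real.sin (2 ^ k * π * ((j:ℝ) / 2 ^ m)) ^ 2) := by
  refine ⟨∑ k ∈ Finset.range m, ((2 : ℝ) ^ (-(α * (k : ℝ)))) ^ 2 * (((2:ℝ)^k + 2^k) * π),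
    fun n hn => ?_⟩
  obtain ⟨N, rfl⟩ : ∃ N, n = N + 1 := ⟨n - 1, by omega⟩
  have hmN : m ≤ N := by omega
  set h : ℝ := (2:ℝ) ^ (-((N+1 : ℕ):ℝ)) with hh
  have hpos : 0 < h := by positivity
  have hN : (2:ℝ) ^ N * h = 1 / 2 := by
    rw [hh, Real.rpow_neg (by norm_num), Real.rpow_natCast, pow_succ]; field_simp
  rw [Finset.sum_range_succ]
  have hlast : Real.sin (2 ^ N * π * ((j:ℝ) / 2 ^ m + h)) ^ 2
            - Real.sin (2 ^ N * π * ((j:ℝ) / 2 ^ m)) ^ 2 = 1 := by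
    have z := wf_sin_zero m j N hmN
    have e : (2:ℝ) ^ N * π * ((j:ℝ) / 2 ^ m + h) = 2 ^ N * π * ((j:ℝ) / 2 ^ m) + π / 2 := by
      rw [mul_add]; congr 1
      calc (2:ℝ) ^ N * π * h = (2 ^ N * h) * π := by ring
        _ = _ := by rw [hN]; ring
    rw [e, Real.sin_add_pi_div_two, z]
    have := Real.sin_sq_add_cos_sq (2 ^ N * π * ((j:ℝ) / 2 ^ m))
    rw [z] at this
    linarith
  rw [hlast, mul_one]
  have hA : ((2 : ℝ) ^ (-(α * ((N+1 : ℕ) : ℝ)))) ^ 2 ≤ ((2 : ℝ) ^ (-(α * (N : ℝ)))) ^ 2 := by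
    gcongr
    · norm_num
    · omega
  obtain ⟨d, rfl⟩ := Nat.exists_eq_add_of_le hmN
  rw [Finset.sum_range_add]
  have hsecond : 0 ≤ ∑ x ∈ Finset.range d, ((2 : ℝ) ^ (-(α * ((m + x : ℕ) : ℝ)))) ^ 2 *
          (Real.sin (2 ^ (m + x) * π * ((j:ℝ) / 2 ^ m + h)) ^ 2
            - Real.sin (2 ^ (m + x) * π * ((j:ℝ) / 2 ^ m)) ^ 2) := by
    refine Finset.sum_nonneg fun x _ => ?_
    rw [wf_sin_zero m j (m + x) (by omega)]
    simp only [ne_eq, OfNat.ofNat_ne_zero, not_false_eq_true, zero_pow, sub_zero]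
    positivity
  have hfirst : -(∑ k ∈ Finset.range m, ((2 : ℝ) ^ (-(α * (k : ℝ)))) ^ 2 * (((2:ℝ)^k + 2^k) * π)) * h
      ≤ ∑ k ∈ Finset.range m, ((2 : ℝ) ^ (-(α * (k : ℝ)))) ^ 2 *
          (Real.sin (2 ^ k * π * ((j:ℝ) / 2 ^ m + h)) ^ 2
            - Real.sin (2 ^ k * π * ((j:ℝ) / 2 ^ m)) ^ 2) := by
    rw [← Finset.sum_neg_distrib, Finset.sum_mul]
    refine Finset.sum_le_sum fun k _ => ?_
    have := wf_lip k k ((j:ℝ) / 2 ^ m + h) ((j:ℝ) / 2 ^ m)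
    rw [add_sub_cancel_left, abs_of_pos hpos, ← sq, ← sq] at this
    have h5 := (abs_le.mp this).1
    have h6 : (0:ℝ) ≤ ((2 : ℝ) ^ (-(α * (k : ℝ)))) ^ 2 := by positivity
    have h7 := mul_le_mul_of_nonneg_left h5 h6
    refine le_trans (le_of_eq ?_) h7
    ring
  linarith

lemma wf_tendsto (α : ℝ) (h1 : 0 < α) (h2 : α < 1 / 2)
    (θ : ℝ → ℝ) (hθ : ContDiff ℝ (⊤ : ℕ∞) θ)
    (hmean : (∫ x in (0 : ℝ)..1, θ x) ≠ 0) (m j : ℕ) :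
    Tendsto (fun n : ℕ => (2 : ℝ) ^ n *
          |weierstrassU α θ ((j : ℝ) / 2 ^ m + (2 : ℝ) ^ (-(n : ℝ)))
            - weierstrassU α θ ((j : ℝ) / 2 ^ m)|) atTop atTop := by
  obtain ⟨K, hK⟩ := wf_split α h1 θ hθ
  obtain ⟨C, hC⟩ := wf_diag α h1 m j
  set Θ := ∫ x in (0 : ℝ)..1, θ x with hΘ
  have hΘ0 : 0 < |Θ| := abs_pos.mpr hmean
  have hgeo : Tendsto (fun n : ℕ => |Θ| / 2 * ((2:ℝ) ^ (1 - 2 * α)) ^ n + -(|Θ| / 2 * C + K))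
      atTop atTop := by
    refine tendsto_atTop_add_const_right _ _ (Tendsto.const_mul_atTop (by positivity) ?_)
    exact tendsto_pow_atTop_atTop_of_one_lt (Real.one_lt_rpow (by norm_num) (by linarith))
  refine tendsto_atTop_mono' _ ?_ hgeo
  filter_upwards [eventually_gt_atTop m] with n hn
  set h : ℝ := (2:ℝ) ^ (-(n:ℝ)) with hh
  have hpos : 0 < h := by positivity
  have hnh : (2:ℝ) ^ n * h = 1 := by
    rw [hh, Real.rpow_neg (by norm_num), Real.rpow_natCast]; field_simp
  have hz : ∀ k, n ≤ k → Real.sin (2 ^ k * π * ((j:ℝ) / 2 ^ m)) = 0 :=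
    fun k hk => wf_sin_zero m j k (by omega)
  have hy : ∀ k, n ≤ k → Real.sin (2 ^ k * π * ((j:ℝ) / 2 ^ m + h)) = 0 := by
    intro k hk
    have e : (2:ℝ) ^ k * π * ((j:ℝ) / 2 ^ m + h)
        = 2 ^ k * π * ((j:ℝ) / 2 ^ m) + 2 ^ k * π * (((1:ℕ):ℝ) / 2 ^ n) := by
      rw [mul_add, hh, Real.rpow_neg (by norm_num), Real.rpow_natCast]; simp
    rw [e, Real.sin_add, hz k hk, wf_sin_zero n 1 k hk]; simp
  have hs := hK n _ _ hy hz
  have hd := hC n hn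
  rw [add_sub_cancel_left, abs_of_pos hpos] at hs
  set D := ∑ k ∈ Finset.range n, ((2 : ℝ) ^ (-(α * (k : ℝ)))) ^ 2 *
          (Real.sin (2 ^ k * π * ((j:ℝ) / 2 ^ m + h)) ^ 2
            - Real.sin (2 ^ k * π * ((j:ℝ) / 2 ^ m)) ^ 2) with hD
  set W := weierstrassU α θ ((j : ℝ) / 2 ^ m + h) - weierstrassU α θ ((j : ℝ) / 2 ^ m)
  have hW : |Θ| / 2 * D - K * h ≤ |W| := by
    have t : |Θ / 2 * D| ≤ |W| + |W - Θ / 2 * D| := by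
      have := abs_sub W (W - Θ / 2 * D)
      rwa [sub_sub_cancel] at this
    have t2 : |Θ| / 2 * D ≤ |Θ / 2 * D| := by
      rw [abs_mul, abs_div, abs_two]
      gcongr
      exact le_abs_self D
    linarith
  have hA : ((2:ℝ) ^ (1 - 2 * α)) ^ n = 2 ^ n * ((2 : ℝ) ^ (-(α * (n : ℝ)))) ^ 2 := by
    rw [← Real.rpow_natCast, ← Real.rpow_natCast, ← Real.rpow_natCast,
      ← Real.rpow_mul (by norm_num), ← Real.rpow_mul (by norm_num), ← Real.rpow_add (by norm_num)]
    congr 1; push_cast; ring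
  have h2n : (0:ℝ) < 2 ^ n := by positivity
  calc |Θ| / 2 * ((2:ℝ) ^ (1 - 2 * α)) ^ n + -(|Θ| / 2 * C + K)
      = 2 ^ n * (|Θ| / 2 * (((2 : ℝ) ^ (-(α * (n : ℝ)))) ^ 2 - C * h) - K * h) := by
        rw [hA]; linear_combination (|Θ| / 2 * C + K) * hnh
    _ ≤ 2 ^ n * (|Θ| / 2 * D - K * h) := by gcongr
    _ ≤ 2 ^ n * |W| := by gcongr

/-- For `0 < α < 1/2` and a smooth `1`-periodic `θ` with nonzero mean, at every dyadic rational
`y₁ = j/2^m ∈ (0,1)` one has `limsup_{n→∞} 2^n |U(y₁+2^{−n};θ) − U(y₁;θ)| = +∞` (formulated as: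
values exceed any bound frequently); consequently `U(·;θ)` is not differentiable at `y₁`. -/
theorem weierstrassU_not_differentiable_dyadic (α : ℝ) (h1 : 0 < α) (h2 : α < 1 / 2)
    (θ : ℝ → ℝ) (hθ : ContDiff ℝ (⊤ : ℕ∞) θ) (hper : Function.Periodic θ 1)
    (hmean : (∫ x in (0 : ℝ)..1, θ x) ≠ 0)
    (m j : ℕ) (hm : 1 ≤ m) (hj1 : 1 ≤ j) (hj2 : j ≤ 2 ^ m - 1) :
    (∀ M : ℝ, ∃ᶠ n : ℕ in atTop,
        M < (2 : ℝ) ^ n *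
          |weierstrassU α θ ((j : ℝ) / 2 ^ m + (2 : ℝ) ^ (-(n : ℝ)))
            - weierstrassU α θ ((j : ℝ) / 2 ^ m)|)
    ∧ ¬∃ L : ℝ, HasDerivAt (weierstrassU α θ) L ((j : ℝ) / 2 ^ m) := by

  have T := wf_tendsto α h1 h2 θ hθ hmean m j
  refine ⟨fun M => (T.eventually_gt_atTop M).frequently, ?_⟩
  rintro ⟨L, hL⟩
  have hseq : Tendsto (fun n : ℕ => (2:ℝ) ^ (-(n:ℝ))) atTop (nhdsWithin 0 {0}ᶜ) := by
    refine tendsto_nhdsWithin_iff.mpr ⟨?_, Eventually.of_forall fun n => ?_⟩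
    · have : (fun n : ℕ => (2:ℝ) ^ (-(n:ℝ))) = fun n : ℕ => ((1:ℝ)/2) ^ n := by
        ext n
        rw [Real.rpow_neg (by norm_num), Real.rpow_natCast]; simp
      rw [this]
      exact tendsto_pow_atTop_nhds_zero_of_lt_one (by norm_num) (by norm_num)
    · have : (0:ℝ) < (2:ℝ) ^ (-(n:ℝ)) := by positivity
      simpa using this.ne'
  have h5 := (hL.tendsto_slope_zero.comp hseq).abs
  refine not_tendsto_nhds_of_tendsto_atTop T |L| (h5.congr fun n => ?_)
  simp only [Function.comp, smul_eq_mul, abs_mul]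
  rw [Real.rpow_neg (by norm_num), Real.rpow_natCast, inv_inv, abs_of_pos (by positivity)]
end

section
/- For every α ∈ (0,1) and every real h with 0 < |h| ≤ 1, one has ∑_{k=0}^∞ 2^{−αk+1} |sin(2^{k−1} π h)| ≤ ( 2^{1−α}/(1 − 2^{−α}) + 2^{2−α} π/(2^{1−α} − 1) ) · |h|^α. -/
open Real Filter

/-- For `α ∈ (0,1)` and `0 < |h| ≤ 1`:
`∑_{k=0}^∞ 2^{−αk+1} |sin(2^{k−1}πh)| ≤ (2^{1−α}/(1−2^{−α}) + 2^{2−α}π/(2^{1−α}−1)) |h|^α`. -/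
theorem weierstrass_modulus_sum_bound (α : ℝ) (hα : α ∈ Set.Ioo (0 : ℝ) 1)
    (h : ℝ) (hne : h ≠ 0) (hle : |h| ≤ 1) :
    (∑' k : ℕ, (2 : ℝ) ^ (-(α * (k : ℝ)) + 1) * |Real.sin ((2 : ℝ) ^ ((k : ℤ) - 1) * π * h)|) ≤
      ((2 : ℝ) ^ (1 - α) / (1 - (2 : ℝ) ^ (-α))
          + (2 : ℝ) ^ (2 - α) * π / ((2 : ℝ) ^ (1 - α) - 1)) * |h| ^ α := by
  obtain ⟨ha0, ha1⟩ := hα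
  have hx : 0 < |h| := abs_pos.mpr hne
  obtain ⟨N, hN1, hN2⟩ := exists_nat_pow_near_of_lt_one hx hle
    (by norm_num : (0 : ℝ) < 1 / 2) (by norm_num)
  have hr1 : (1 : ℝ) < 2 ^ (1 - α) := Real.one_lt_rpow (by norm_num) (by linarith)
  have hr : (2 : ℝ) ^ (1 - α) = 2 * 2 ^ (-α) := by
    rw [sub_eq_add_neg, Real.rpow_add (by norm_num), Real.rpow_one]
  have hr2 : (2 : ℝ) ^ (2 - α) = 4 * 2 ^ (-α) := by
    rw [sub_eq_add_neg, Real.rpow_add (by norm_num), Real.rpow_two]; norm_num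
  have hq1 : (2 : ℝ) ^ (-α) < 1 := Real.rpow_lt_one_of_one_lt_of_neg (by norm_num) (by linarith)
  have hq0 : (0 : ℝ) < 2 ^ (-α) := by positivity
  have hA : ((2 : ℝ) ^ (-α)) ^ (N + 1) ≤ |h| ^ α := by
    have e : ((2 : ℝ) ^ (-α)) ^ (N + 1) = (((1 : ℝ) / 2) ^ (N + 1)) ^ α := by
      rw [Real.rpow_neg (by norm_num), ← Real.inv_rpow (by norm_num), Real.rpow_pow_comm (by norm_num)]
      norm_num
    rw [e]
    exact Real.rpow_le_rpow (by positivity) hN1.le ha0.le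
  have hB : |h| * ((2 : ℝ) ^ (1 - α)) ^ N ≤ |h| ^ α := by
    have e : |h| = |h| ^ α * |h| ^ (1 - α) := by
      rw [← Real.rpow_add hx]; simp
    have h1 : |h| ^ (1 - α) * ((2 : ℝ) ^ (1 - α)) ^ N ≤ 1 := by
      rw [Real.rpow_pow_comm (by norm_num), ← Real.mul_rpow hx.le (by positivity)]
      apply Real.rpow_le_one (by positivity) _ (by linarith)
      calc |h| * 2 ^ N ≤ (1 / 2) ^ N * 2 ^ N := by gcongr
        _ = 1 := by rw [← mul_pow]; norm_num
    calc |h| * ((2 : ℝ) ^ (1 - α)) ^ N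
        = |h| ^ α * (|h| ^ (1 - α) * ((2 : ℝ) ^ (1 - α)) ^ N) := by
          rw [← mul_assoc, ← e]
      _ ≤ |h| ^ α * 1 := by gcongr
      _ = _ := mul_one _
  have hterm : ∀ k : ℕ, (2 : ℝ) ^ (-(α * (k : ℝ)) + 1) = 2 * (2 ^ (-α)) ^ k := by
    intro k
    rw [Real.rpow_add (by norm_num), Real.rpow_one, ← neg_mul, Real.rpow_mul (by norm_num),
      Real.rpow_natCast, mul_comm]
  simp only [hterm]
  rw [hr2]
  rw [hr] at hr1 hB ⊢
  generalize (2 : ℝ) ^ (-α) = q at *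
  generalize |h| ^ α = X at *
  have hb1 : ∀ k : ℕ, 2 * q ^ k * |Real.sin ((2 : ℝ) ^ ((k : ℤ) - 1) * π * h)| ≤ 2 * q ^ k := by
    intro k
    exact mul_le_of_le_one_right (by positivity) (Real.abs_sin_le_one _)
  have hb2 : ∀ k : ℕ, 2 * q ^ k * |Real.sin ((2 : ℝ) ^ ((k : ℤ) - 1) * π * h)|
      ≤ π * |h| * (2 * q) ^ k := by
    intro k
    have h1 : |Real.sin ((2 : ℝ) ^ ((k : ℤ) - 1) * π * h)| ≤ 2 ^ k / 2 * π * |h| := by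
      refine Real.abs_sin_le_abs.trans (le_of_eq ?_)
      rw [abs_mul, abs_mul, abs_of_pos Real.pi_pos, zpow_sub₀ (by norm_num), abs_of_pos (by positivity)]
      simp
    calc _ ≤ 2 * q ^ k * (2 ^ k / 2 * π * |h|) := by gcongr
      _ = _ := by rw [mul_pow]; ring
  have hg : Summable fun k : ℕ => q ^ k := summable_geometric_of_lt_one hq0.le hq1
  have hs : Summable fun k : ℕ => 2 * q ^ k * |Real.sin ((2 : ℝ) ^ ((k : ℤ) - 1) * π * h)| :=
    Summable.of_nonneg_of_le (fun k => by positivity) hb1 (hg.mul_left 2)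
  rw [← hs.sum_add_tsum_nat_add (N + 2)]
  have hhead : ∑ k ∈ Finset.range (N + 2),
      2 * q ^ k * |Real.sin ((2 : ℝ) ^ ((k : ℤ) - 1) * π * h)| ≤ 4 * q * π / (2 * q - 1) * X := by
    have hd : 0 < 2 * q - 1 := by linarith
    calc _ ≤ ∑ k ∈ Finset.range (N + 2), π * |h| * (2 * q) ^ k := Finset.sum_le_sum fun k _ => hb2 k
      _ = π * |h| * (((2 * q) ^ (N + 2) - 1) / (2 * q - 1)) := by
        rw [← Finset.mul_sum, geom_sum_eq hr1.ne']
      _ ≤ π * |h| * ((2 * q) ^ (N + 2) / (2 * q - 1)) := by gcongr; linarith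
      _ = π * (2 * q) * (2 * q) / (2 * q - 1) * (|h| * (2 * q) ^ N) := by ring
      _ ≤ π * (2 * q) * 2 / (2 * q - 1) * X := by gcongr; linarith
      _ = _ := by ring
  have htail : ∑' k : ℕ, 2 * q ^ (k + (N + 2)) *
      |Real.sin ((2 : ℝ) ^ (((k + (N + 2) : ℕ) : ℤ) - 1) * π * h)| ≤ 2 * q / (1 - q) * X := by
    have hd : 0 < 1 - q := by linarith
    have hg2 : Summable fun k : ℕ => 2 * q ^ (k + (N + 2)) :=
      ((summable_nat_add_iff (N + 2)).2 hg).mul_left 2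
    calc _ ≤ ∑' k : ℕ, 2 * q ^ (k + (N + 2)) :=
          ((summable_nat_add_iff (N + 2)).2 hs).tsum_le_tsum (fun k => hb1 (k + (N + 2))) hg2
      _ = ∑' k : ℕ, (2 * q ^ (N + 2)) * q ^ k := by congr 1; ext k; ring
      _ = 2 * q / (1 - q) * q ^ (N + 1) := by
        rw [tsum_mul_left, tsum_geometric_of_lt_one hq0.le hq1]; ring
      _ ≤ _ := by gcongr
  rw [add_mul]
  linarith
end
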